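/- arXiv:2104.01216 — 8 statements merged into one kernel-verified Lean document; each statement's English description precedes it below -/
import Mathlib

section
/- Let N ≥ 1 and let α, β, γ, δ ∈ ℂ satisfy α ≠ 0, β ≠ 0, γ ≠ 0, δ ≠ 0 and α·δ ≠ β·γ. For each j ∈ {0, …, N}, the vector v_j ∈ ℂ^{N+1} with entries v_j[k] = Σ_{i=0}^{min(k,j)} C(j,i)·C(N−j, k−i)·(δ/γ)^{k−i}·(β/α)^{i} for k = 0, …, N is nonzero (indeed v_j[0] = 1) and satisfies J_N · v_j = (α·δ·(N−j) + β·γ·j) · v_j. In particular the N+1 numbers α·δ·(N−j) + β·γ·j, j = 0, …, N, are pairwise distinct eigenvalues of J_N. -/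
open Matrix

/-- The generalised Sylvester-Kac matrix `J_N` depending on parameters `α β γ δ`. -/
noncomputable def Jmat (N : ℕ) (α β γ δ : ℂ) : Matrix (Fin (N+1)) (Fin (N+1)) ℂ :=
  Matrix.of fun k l =>
    if (l : ℕ) = (k : ℕ) + 1 then ((k : ℕ) + 1 : ℂ) * α * γ
    else if (l : ℕ) = (k : ℕ) then ((k : ℕ) : ℂ) * (α * δ + β * γ)
    else if (l : ℕ) + 1 = (k : ℕ) then -((N - (k : ℕ) + 1 : ℕ) : ℂ) * β * δ
    else 0

/-!
Reading a vector `w` as the coefficients of a polynomial `p` of degree at most `N`, the matrix `J_N`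
becomes the first-order differential operator
`p ↦ (α + β X) (γ + δ X) p' - N β δ X p`.
For `p = (γ + δ X) ^ a * (α + β X) ^ b` with `a + b = N`, the product rule turns the derivative term
into `(a δ (α + β X) + b β (γ + δ X)) p`; its part `(a + b) β δ X p` cancels, leaving the eigenvalue
`α δ a + β γ b`. The vector `v_j` is the coefficient vector for `a = N - j`, `b = j`, normalised to
have constant coefficient `1`.
-/

open Polynomial

section CommSemiring

variable {R : Type*} [CommSemiring R]

lemma mul_derivative_pow (p : R[X]) (n : ℕ) :
    p * derivative (p ^ n) = C (n : R) * p ^ n * derivative p := by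
  cases n with
  | zero => simp
  | succ n =>
    rw [derivative_pow, Nat.add_sub_cancel]
    ring

/-- The polynomial `(γ + δ X) ^ a * (α + β X) ^ b`, an eigenvector of
`sylvesterKacOp (a + b) α β γ δ`. -/
noncomputable def sylvesterKacPoly (α β γ δ : R) (a b : ℕ) : R[X] :=
  (C γ + C δ * X) ^ a * (C α + C β * X) ^ b

lemma natDegree_sylvesterKacPoly_le (α β γ δ : R) (a b : ℕ) :
    (sylvesterKacPoly α β γ δ a b).natDegree ≤ a + b := by
  unfold sylvesterKacPoly
  compute_degree

end CommSemiring

section CommRing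

variable {R : Type*} [CommRing R]

/-- The differential operator `p ↦ (α + β X) (γ + δ X) p' - n β δ X p`, which for a natural
number `n` has matrix `J_n` in the monomial basis of the polynomials of degree at most `n`. -/
noncomputable def sylvesterKacOp (n α β γ δ : R) : R[X] →ₗ[R] R[X] :=
  LinearMap.mulLeft R ((C α + C β * X) * (C γ + C δ * X)) ∘ₗ derivative -
    LinearMap.mulLeft R (C (n * β * δ) * X)

lemma sylvesterKacOp_apply (n α β γ δ : R) (p : R[X]) :
    sylvesterKacOp n α β γ δ p =
      (C α + C β * X) * (C γ + C δ * X) * derivative p - C (n * β * δ) * X * p :=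
  rfl

lemma sylvesterKacOp_apply_eq_expanded (n α β γ δ : R) (p : R[X]) :
    sylvesterKacOp n α β γ δ p =
      C (α * γ) * derivative p + X * (C (α * δ + β * γ) * derivative p) +
        X * (X * (C (β * δ) * derivative p)) - X * (C (n * β * δ) * p) := by
  rw [sylvesterKacOp_apply]
  simp only [C_add, C_mul]
  ring

lemma coeff_zero_sylvesterKacOp (n α β γ δ : R) (p : R[X]) :
    (sylvesterKacOp n α β γ δ p).coeff 0 = α * γ * p.coeff 1 := by
  simp [sylvesterKacOp_apply_eq_expanded, coeff_derivative]

lemma coeff_succ_sylvesterKacOp (n α β γ δ : R) (p : R[X]) (k : ℕ) :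
    (sylvesterKacOp n α β γ δ p).coeff (k + 1) =
      (k + 2) * α * γ * p.coeff (k + 2) + (k + 1) * (α * δ + β * γ) * p.coeff (k + 1) -
        (n - k) * β * δ * p.coeff k := by
  cases k <;>
  · simp only [sylvesterKacOp_apply_eq_expanded, coeff_sub, coeff_add, coeff_C_mul, coeff_X_mul,
      coeff_X_mul_zero, coeff_derivative]
    push_cast
    ring

lemma sylvesterKacOp_sylvesterKacPoly (α β γ δ : R) (a b : ℕ) :
    sylvesterKacOp (a + b : R) α β γ δ (sylvesterKacPoly α β γ δ a b) =
      (α * δ * a + β * γ * b) • sylvesterKacPoly α β γ δ a b := by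
  have hlinear (c d : R) : derivative (C c + C d * X) = C d := by simp
  have hγδ := mul_derivative_pow (C γ + C δ * X) a
  have hαβ := mul_derivative_pow (C α + C β * X) b
  rw [hlinear] at hγδ hαβ
  rw [sylvesterKacOp_apply, sylvesterKacPoly, derivative_mul, smul_eq_C_mul]
  simp only [C_add, C_mul]
  linear_combination (C α + C β * X) * (C α + C β * X) ^ b * hγδ +
    (C γ + C δ * X) * (C γ + C δ * X) ^ a * hαβ

lemma injective_sylvesterKac_eigenvalue [IsDomain R] [CharZero R] (n : R) {α β γ δ : R}
    (h : α * δ ≠ β * γ) :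
    Function.Injective fun j : ℕ => α * δ * (n - j) + β * γ * j := by
  intro i j hij
  have hmul : (α * δ - β * γ) * (i : R) = (α * δ - β * γ) * j := by linear_combination -hij
  exact Nat.cast_injective (mul_left_cancel₀ (sub_ne_zero.mpr h) hmul)

end CommRing

section Semifield

variable {K : Type*} [Semifield K]

lemma coeff_C_add_C_mul_X_pow {c : K} (hc : c ≠ 0) (d : K) (n k : ℕ) :
    ((C c + C d * X) ^ n).coeff k = c ^ n * (n.choose k * (d / c) ^ k) := by
  have hscale : (C c + C d * X : K[X]) ^ n = C (c ^ n) * ((1 + X) ^ n).comp (C (d / c) * X) := by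
    rw [pow_comp, C_pow, ← mul_pow, add_comp, one_comp, X_comp, mul_add, mul_one, ← mul_assoc,
      ← C_mul, mul_div_cancel₀ d hc]
  rw [hscale, coeff_C_mul, comp_C_mul_X_coeff, coeff_one_add_X_pow]

lemma coeff_sylvesterKacPoly {α γ : K} (hα : α ≠ 0) (hγ : γ ≠ 0) (β δ : K) (a b k : ℕ) :
    (sylvesterKacPoly α β γ δ a b).coeff k =
      γ ^ a * α ^ b * ∑ i ∈ Finset.range (min k b + 1),
        (b.choose i : K) * (a.choose (k - i) : K) * (δ / γ) ^ (k - i) * (β / α) ^ i := by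
  rw [sylvesterKacPoly, mul_comm, coeff_mul, Finset.Nat.sum_antidiagonal_eq_sum_range_succ_mk,
    Finset.mul_sum]
  symm
  apply Finset.sum_subset_zero_on_sdiff
  · exact Finset.range_mono (by omega)
  · intro i hi
    have hb : b < i := by
      simp only [Finset.mem_sdiff, Finset.mem_range] at hi
      omega
    simp [coeff_C_add_C_mul_X_pow hα, Nat.choose_eq_zero_of_lt hb]
  · intro i _
    rw [coeff_C_add_C_mul_X_pow hα, coeff_C_add_C_mul_X_pow hγ]
    ring

end Semifield

lemma Jmat_apply_eq_coeff (N : ℕ) (α β γ δ : ℂ) (k l : Fin (N + 1)) :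
    Jmat N α β γ δ k l = (sylvesterKacOp (N : ℂ) α β γ δ (X ^ (l : ℕ))).coeff k := by
  obtain ⟨k, hk⟩ := k
  obtain ⟨l, hl⟩ := l
  rcases k with _ | k
  · simp only [Jmat, of_apply, coeff_zero_sylvesterKacOp, coeff_X_pow, Nat.add_eq_zero_iff,
      one_ne_zero, and_false, if_false]
    split_ifs <;> first | omega | simp
  · have hcast : ((N - (k + 1) + 1 : ℕ) : ℂ) = N - k := by
      rw [show N - (k + 1) + 1 = N - k by omega, Nat.cast_sub (by omega)]
    simp only [Jmat, of_apply, coeff_succ_sylvesterKacOp, coeff_X_pow, hcast]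
    split_ifs <;> first | omega | (push_cast; ring)

lemma Jmat_mulVec_coeff (N : ℕ) (α β γ δ : ℂ) {p : ℂ[X]} (hp : p.natDegree ≤ N) :
    (Jmat N α β γ δ).mulVec (fun l => p.coeff l) =
      fun k : Fin (N + 1) => (sylvesterKacOp (N : ℂ) α β γ δ p).coeff k := by
  ext k
  conv_rhs => rw [p.as_sum_range_C_mul_X_pow' (Nat.lt_succ_of_le hp)]
  simp only [mulVec, dotProduct, Jmat_apply_eq_coeff, ← smul_eq_C_mul, map_sum, map_smul,
    finsetSum_coeff, coeff_smul, smul_eq_mul, Finset.sum_range]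
  exact Finset.sum_congr rfl fun l _ => mul_comm _ _

lemma Jmat_mulVec_coeff_sylvesterKacPoly (α β γ δ : ℂ) {N a b : ℕ} (hab : a + b = N) :
    (Jmat N α β γ δ).mulVec (fun l => (sylvesterKacPoly α β γ δ a b).coeff l) =
      (α * δ * a + β * γ * b) • fun k : Fin (N + 1) => (sylvesterKacPoly α β γ δ a b).coeff k := by
  subst hab
  rw [Jmat_mulVec_coeff _ _ _ _ _ (natDegree_sylvesterKacPoly_le α β γ δ a b), Nat.cast_add,
    sylvesterKacOp_sylvesterKacPoly]
  rfl

lemma Jmat_mulVec_of_sum_choose {α γ : ℂ} (hα : α ≠ 0) (hγ : γ ≠ 0) (β δ : ℂ) {N a b : ℕ}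
    (hab : a + b = N) {w : Fin (N + 1) → ℂ}
    (hw : ∀ k, w k = ∑ i ∈ Finset.range (min (k : ℕ) b + 1),
      (b.choose i : ℂ) * (a.choose (k - i) : ℂ) * (δ / γ) ^ ((k : ℕ) - i) * (β / α) ^ i) :
    (Jmat N α β γ δ).mulVec w = (α * δ * a + β * γ * b) • w := by
  have hscale : (fun k : Fin (N + 1) => (sylvesterKacPoly α β γ δ a b).coeff k) =
      (γ ^ a * α ^ b) • w := by
    ext k
    rw [coeff_sylvesterKacPoly hα hγ, Pi.smul_apply, smul_eq_mul, hw]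
  have heigen := Jmat_mulVec_coeff_sylvesterKacPoly α β γ δ hab
  rw [hscale, mulVec_smul, smul_comm] at heigen
  exact smul_right_injective _ (mul_ne_zero (pow_ne_zero _ hγ) (pow_ne_zero _ hα)) heigen

theorem stmt_0 (N : ℕ) (hN : 1 ≤ N) (α β γ δ : ℂ)
    (hα : α ≠ 0) (hβ : β ≠ 0) (hγ : γ ≠ 0) (hδ : δ ≠ 0)
    (hD : α * δ ≠ β * γ)
    (v : Fin (N+1) → Fin (N+1) → ℂ)
    (hv : ∀ j k, v j k = ∑ i ∈ Finset.range (min (k : ℕ) (j : ℕ) + 1),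
        ((j : ℕ).choose i : ℂ) * ((N - (j : ℕ)).choose ((k : ℕ) - i) : ℂ) *
          (δ / γ) ^ ((k : ℕ) - i) * (β / α) ^ i)
    (μ : Fin (N+1) → ℂ)
    (hμ : ∀ j, μ j = α * δ * ((N : ℂ) - (j : ℕ)) + β * γ * (j : ℕ)) :
    (∀ j, v j 0 = 1) ∧ (∀ j, v j ≠ 0) ∧
      (∀ j, (Jmat N α β γ δ).mulVec (v j) = μ j • v j) ∧
      (∀ j j' : Fin (N+1), j ≠ j' → μ j ≠ μ j') := by
  have hone (j : Fin (N + 1)) : v j 0 = 1 := by simp [hv]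
  refine ⟨hone, fun j hj => by simpa [hj] using hone j, fun j => ?_, fun j j' hjj' hμjj' => ?_⟩
  · have hj : (j : ℕ) ≤ N := Nat.le_of_lt_succ j.isLt
    rw [hμ, ← Nat.cast_sub hj]
    exact Jmat_mulVec_of_sum_choose hα hγ β δ (Nat.sub_add_cancel hj) (hv j)
  · rw [hμ, hμ] at hμjj'
    exact hjj' (Fin.ext (injective_sylvesterKac_eigenvalue (N : ℂ) hD hμjj'))
end

section
/- For every N ≥ 1 and all α, β, γ, δ ∈ ℂ, the characteristic polynomial of the matrix J_N factors completely with integer-combination roots: det(x·I_{N+1} − J_N) = Π_{j=0}^{N} (x − α·δ·(N−j) − β·γ·j) as polynomials in x over ℂ. -/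
open Matrix Polynomial

/-!
`J_N` is the matrix, in the monomial basis of the polynomials of degree at most `N`, of the
operator `p ↦ (α + β X) (γ + δ X) (derivative p) - N β δ X p`. By the product rule,
`(α + β X) ^ i * (γ + δ X) ^ j` with `i + j = N` is an eigenvector with eigenvalue
`α δ j + β γ i`. In a domain of characteristic zero with `α δ ≠ β γ` these eigenvalues are `N + 1`
distinct roots of the characteristic polynomial, hence all of them. In particular the factorization
holds for indeterminate parameters over `ℤ`, and therefore for all parameters in any commutative
ring.
-/

section Roots

variable {R ι : Type*} [CommRing R] [IsDomain R] [Fintype ι]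

lemma isRoot_charpoly_of_mulVec_eq_smul [DecidableEq ι] {A : Matrix ι ι R} {v : ι → R} {μ : R}
    (hv : v ≠ 0) (h : A *ᵥ v = μ • v) : A.charpoly.IsRoot μ := by
  rw [IsRoot.def, eval_charpoly, ← exists_mulVec_eq_zero_iff]
  exact ⟨v, hv, by rw [sub_mulVec, h, scalar_apply, ← smul_one_eq_diagonal, smul_mulVec,
    one_mulVec, sub_self]⟩

lemma eq_prod_X_sub_C_of_monic_of_isRoot {p : R[X]} (hp : p.Monic)
    (hdegree : p.degree = Fintype.card ι) {μ : ι → R} (hμ : Function.Injective μ)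
    (hroot : ∀ i, p.IsRoot (μ i)) : p = ∏ i, (X - C (μ i)) := by
  have degree_prod_eq : (∏ i, (X - C (μ i)) : R[X]).degree = Fintype.card ι := by
    simp [degree_prod]
  refine eq_of_degree_sub_lt_of_eval_index_eq Finset.univ hμ.injOn ?_ fun i _ => ?_
  · rw [Finset.card_univ, ← hdegree]
    refine degree_sub_lt_left (hdegree.trans degree_prod_eq.symm) hp.ne_zero ?_
    rw [hp.leadingCoeff, (monic_prod_X_sub_C μ _).leadingCoeff]
  · rw [hroot i, eval_prod, Finset.prod_eq_zero (Finset.mem_univ i) (by simp)]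

end Roots

section CommRing

variable {R : Type*} [CommRing R]

/-- The generalised Sylvester-Kac matrix over a commutative ring. The natural number subtraction
`N - k` does not truncate, as `k ≤ N`. -/
def sylvesterKac (N : ℕ) (α β γ δ : R) : Matrix (Fin (N + 1)) (Fin (N + 1)) R :=
  Matrix.of fun k l =>
    if (l : ℕ) = k + 1 then ((k : ℕ) + 1 : R) * α * γ
    else if (l : ℕ) = k then ((k : ℕ) : R) * (α * δ + β * γ)
    else if (l : ℕ) + 1 = k then -((N - k + 1 : ℕ) : R) * β * δ
    else 0

lemma sylvesterKac_map {S : Type*} [CommRing S] (f : R →+* S) (N : ℕ) (α β γ δ : R) :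
    (sylvesterKac N α β γ δ).map f = sylvesterKac N (f α) (f β) (f γ) (f δ) := by
  ext k l
  simp [sylvesterKac, apply_ite f]

/-- The first-order differential operator represented by `sylvesterKac N α β γ δ` in the monomial
basis of the polynomials of degree at most `N`. It is defined on all polynomials, so that no
restriction to an invariant submodule is needed. -/
noncomputable def sylvesterKacOperator (N : ℕ) (α β γ δ : R) : R[X] →ₗ[R] R[X] :=
  LinearMap.mulLeft R ((C α + C β * X) * (C γ + C δ * X)) ∘ₗ derivative -
    LinearMap.mulLeft R (C (N * β * δ) * X)

lemma sylvesterKacOperator_apply (N : ℕ) (α β γ δ : R) (p : R[X]) :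
    sylvesterKacOperator N α β γ δ p =
      (C α + C β * X) * (C γ + C δ * X) * derivative p - C (N * β * δ) * X * p :=
  rfl

lemma coeff_sylvesterKacOperator_X_pow (N : ℕ) (α β γ δ : R) (k l : Fin (N + 1)) :
    (sylvesterKacOperator N α β γ δ (X ^ (l : ℕ))).coeff k = sylvesterKac N α β γ δ k l := by
  obtain ⟨k, hk⟩ := k
  obtain ⟨l, hl⟩ := l
  have hkN : k ≤ N := by omega
  rw [sylvesterKacOperator_apply]
  simp only [sylvesterKac, Matrix.of_apply, Nat.cast_add, Nat.cast_sub hkN, Nat.cast_one]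
  cases l with
  | zero =>
    have expansion : (C α + C β * X) * (C γ + C δ * X) * derivative (X ^ 0) -
        C (N * β * δ) * X * X ^ 0 = C (-(N * β * δ)) * X ^ 1 := by
      simp
    rw [expansion, coeff_C_mul_X_pow]
    split_ifs <;> first | contradiction | omega | (subst_vars; push_cast; ring)
  | succ l =>
    have expansion : (C α + C β * X) * (C γ + C δ * X) * derivative (X ^ (l + 1)) -
        C (N * β * δ) * X * X ^ (l + 1) =
          C ((l + 1) * α * γ) * X ^ l + C ((l + 1) * (α * δ + β * γ)) * X ^ (l + 1) +
            C ((l + 1 - N) * β * δ) * X ^ (l + 2) := by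
      simp only [derivative_X_pow_succ, map_add, map_sub, map_mul, map_natCast, map_one]
      ring
    rw [expansion, coeff_add, coeff_add, coeff_C_mul_X_pow, coeff_C_mul_X_pow, coeff_C_mul_X_pow]
    split_ifs <;> first | contradiction | omega | (subst_vars; push_cast; ring)

lemma sylvesterKac_mulVec_coeff {N : ℕ} (α β γ δ : R) {p : R[X]} (hp : p.natDegree ≤ N) :
    sylvesterKac N α β γ δ *ᵥ (fun l : Fin (N + 1) => p.coeff l) =
      fun k : Fin (N + 1) => (sylvesterKacOperator N α β γ δ p).coeff k := by
  ext k
  have p_eq_sum : p = ∑ l : Fin (N + 1), p.coeff l • X ^ (l : ℕ) := by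
    simp_rw [smul_eq_C_mul]
    rw [Fin.sum_univ_eq_sum_range fun l => C (p.coeff l) * X ^ l]
    exact p.as_sum_range_C_mul_X_pow' (Nat.lt_succ_of_le hp)
  conv_rhs => rw [p_eq_sum, map_sum, finsetSum_coeff]
  simp only [mulVec, dotProduct, map_smul, coeff_smul, coeff_sylvesterKacOperator_X_pow,
    smul_eq_mul, mul_comm]

lemma linear_mul_derivative_linear_pow (a b : R) (m : ℕ) :
    (C a + C b * X) * derivative ((C a + C b * X) ^ m) = C (m * b) * (C a + C b * X) ^ m := by
  cases m with
  | zero => simp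
  | succ m =>
    simp only [derivative_pow_succ, derivative_C, derivative_C_mul, derivative_X,
      map_add, map_mul, map_natCast, map_one, Nat.cast_add, Nat.cast_one]
    ring

lemma sylvesterKacOperator_linear_pow_mul_linear_pow (i j : ℕ) (α β γ δ : R) :
    sylvesterKacOperator (i + j) α β γ δ ((C α + C β * X) ^ i * (C γ + C δ * X) ^ j) =
      (α * δ * j + β * γ * i) • ((C α + C β * X) ^ i * (C γ + C δ * X) ^ j) := by
  have derivative_left := linear_mul_derivative_linear_pow α β i
  have derivative_right := linear_mul_derivative_linear_pow γ δ j
  rw [sylvesterKacOperator_apply, derivative_mul, smul_eq_C_mul]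
  simp only [map_add, map_mul, map_natCast, Nat.cast_add] at derivative_left derivative_right ⊢
  linear_combination (C γ + C δ * X) * (C γ + C δ * X) ^ j * derivative_left +
    (C α + C β * X) * (C α + C β * X) ^ i * derivative_right

lemma natDegree_linear_pow_mul_linear_pow_le (i j : ℕ) (α β γ δ : R) :
    ((C α + C β * X) ^ i * (C γ + C δ * X) ^ j).natDegree ≤ i + j := by
  compute_degree

lemma C_add_C_mul_X_ne_zero {a b : R} (h : a ≠ 0 ∨ b ≠ 0) : C a + C b * X ≠ 0 := by
  intro h0
  have ha : a = 0 := by simpa using congrArg (coeff · 0) h0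
  have hb : b = 0 := by simpa using congrArg (coeff · 1) h0
  exact h.elim (· ha) (· hb)

end CommRing

section IsDomain

variable {R : Type*} [CommRing R] [IsDomain R]

lemma linear_pow_mul_linear_pow_ne_zero {α β γ δ : R} (h : α * δ ≠ β * γ) (i j : ℕ) :
    (C α + C β * X) ^ i * (C γ + C δ * X) ^ j ≠ 0 := by
  refine mul_ne_zero (pow_ne_zero i (C_add_C_mul_X_ne_zero ?_))
    (pow_ne_zero j (C_add_C_mul_X_ne_zero ?_)) <;>
  · by_contra! h0
    simp [h0] at h

lemma isRoot_charpoly_sylvesterKac {α β γ δ : R} (h : α * δ ≠ β * γ) {N i j : ℕ}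
    (hij : i + j = N) : (sylvesterKac N α β γ δ).charpoly.IsRoot (α * δ * j + β * γ * i) := by
  subst hij
  set p := (C α + C β * X) ^ i * (C γ + C δ * X) ^ j
  have p_ne_zero : p ≠ 0 := linear_pow_mul_linear_pow_ne_zero h i j
  have p_natDegree : p.natDegree ≤ i + j := natDegree_linear_pow_mul_linear_pow_le i j α β γ δ
  refine isRoot_charpoly_of_mulVec_eq_smul (v := fun l : Fin (i + j + 1) => p.coeff l)
    (fun hv => p_ne_zero ?_) ?_
  · exact leadingCoeff_eq_zero.mp (congrFun hv ⟨p.natDegree, Nat.lt_succ_of_le p_natDegree⟩)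
  · rw [sylvesterKac_mulVec_coeff α β γ δ p_natDegree,
      sylvesterKacOperator_linear_pow_mul_linear_pow]
    rfl

lemma charpoly_sylvesterKac_of_ne [CharZero R] (N : ℕ) {α β γ δ : R} (h : α * δ ≠ β * γ) :
    (sylvesterKac N α β γ δ).charpoly =
      ∏ j : Fin (N + 1), (X - C (α * δ * (N - (j : ℕ)) + β * γ * (j : ℕ))) := by
  refine eq_prod_X_sub_C_of_monic_of_isRoot (charpoly_monic _) (charpoly_degree_eq_dim _)
    (fun i j hij => ?_) fun j => ?_
  · have : (α * δ - β * γ) * ((i : ℕ) - (j : ℕ) : R) = 0 := by linear_combination -hij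
    simpa [sub_ne_zero.mpr h, sub_eq_zero, Fin.val_inj] using this
  · have hj : (j : ℕ) ≤ N := Nat.le_of_lt_succ j.isLt
    simpa [Nat.cast_sub hj] using isRoot_charpoly_sylvesterKac h (Nat.add_sub_cancel' hj)

end IsDomain

theorem stmt_1_general {R : Type*} [CommRing R] (N : ℕ) (α β γ δ : R) :
    (sylvesterKac N α β γ δ).charpoly =
      ∏ j : Fin (N + 1), (X - C (α * δ * (N - (j : ℕ)) + β * γ * (j : ℕ))) := by
  let x : Fin 4 → MvPolynomial (Fin 4) ℤ := MvPolynomial.X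
  let f : MvPolynomial (Fin 4) ℤ →+* R := (MvPolynomial.aeval ![α, β, γ, δ]).toRingHom
  have generic_ne : x 0 * x 3 ≠ x 1 * x 2 := fun h => by
    simpa [x] using congrArg (MvPolynomial.eval ![1, 0, 0, 1]) h
  have generic := congrArg (Polynomial.map f) (charpoly_sylvesterKac_of_ne N generic_ne)
  rw [← charpoly_map, sylvesterKac_map] at generic
  simpa [f, x, Polynomial.map_prod] using generic

theorem stmt_1 (N : ℕ) (hN : 1 ≤ N) (α β γ δ : ℂ) :
    (Jmat N α β γ δ).charpoly =
      ∏ j : Fin (N+1),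
        (X - C (α * δ * ((N : ℂ) - (j : ℕ)) + β * γ * (j : ℕ))) :=
  stmt_1_general N α β γ δ
end

section
/- Let N ≥ 1, let a, b, c ∈ ℂ with a ≠ 0 and c ≠ 0, and let s ∈ ℂ satisfy s² = b² − 4·a·c and s ≠ 0 (so b + s ≠ 0 and b − s ≠ 0 automatically, since (b+s)(b−s) = 4ac ≠ 0). For each j ∈ {0, …, N}, the vector v_j ∈ ℂ^{N+1} with entries v_j[k] = (2c/(b+s))^k · Σ_{i=0}^{min(k,j)} C(j,i)·C(N−j, k−i)·((b+s)/(b−s))^{i}, k = 0, …, N, is nonzero (v_j[0] = 1) and satisfies B_N(a,b,c) · v_j = λ_j · v_j, where λ_j = j·(b+s)/2 + (N−j)·(b−s)/2. -/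
open Matrix

/-- The matrix `B_N(a,b,c)`. -/
noncomputable def Bmat (N : ℕ) (a b c : ℂ) : Matrix (Fin (N+1)) (Fin (N+1)) ℂ :=
  Matrix.of fun k l =>
    if (l : ℕ) = (k : ℕ) + 1 then ((k : ℕ) + 1 : ℂ) * a
    else if (l : ℕ) = (k : ℕ) then ((k : ℕ) : ℂ) * b
    else if (l : ℕ) + 1 = (k : ℕ) then -((N - (k : ℕ) + 1 : ℕ) : ℂ) * c
    else 0

/-! On polynomials of degree at most `N`, written in the monomial basis, `B_N(a,b,c)` is the
differential operator `f ↦ (a + bX + cX²) f' - NcX f`. Factoring `a + bX + cX²` as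
`a (1 + pX) (1 + qX)` makes every product `(1 + pX)^(N-j) (1 + qX)^j` an eigenfunction, since its
logarithmic derivative is `(N-j) p / (1 + pX) + j q / (1 + qX)`. The coefficients of these products
are the vectors `v_j`, for `p = 2c / (b + s)` and `q = 2c / (b - s)`. -/

open Polynomial

section CommSemiring

variable {R : Type*} [CommSemiring R]

lemma coeff_one_add_C_mul_X_pow (p : R) (n k : ℕ) :
    ((1 + C p * X : R[X]) ^ n).coeff k = n.choose k * p ^ k := by
  have h : (1 + C p * X : R[X]) ^ n = ((1 + X) ^ n).comp (C p * X) := by simp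
  rw [h, comp_C_mul_X_coeff, coeff_one_add_X_pow]

lemma one_add_C_mul_X_mul_derivative_pow (p : R) (n : ℕ) :
    (1 + C p * X) * derivative ((1 + C p * X) ^ n) = C (n * p) * (1 + C p * X) ^ n := by
  cases n with
  | zero => simp
  | succ n =>
    simp only [derivative_pow, derivative_add, derivative_one, derivative_C_mul, derivative_X,
      map_mul, Nat.add_sub_cancel]
    ring

/-- The polynomial `(1 + pX)^m (1 + qX)^j`, whose coefficients are the entries of an eigenvector of
`kacMatrix (m + j)`. -/
noncomputable def eigenPoly (p q : R) (m j : ℕ) : R[X] :=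
  (1 + C p * X) ^ m * (1 + C q * X) ^ j

lemma natDegree_eigenPoly_le (p q : R) (m j : ℕ) : (eigenPoly p q m j).natDegree ≤ m + j := by
  unfold eigenPoly
  compute_degree

lemma coeff_eigenPoly_mul (p r : R) (m j k : ℕ) :
    (eigenPoly p (p * r) m j).coeff k = p ^ k *
      ∑ i ∈ Finset.range (min k j + 1), (j.choose i : R) * (m.choose (k - i) : R) * r ^ i := by
  have summand_eq_zero : ∀ i ∈ Finset.range (k + 1), i ∉ Finset.range (min k j + 1) →
      (j.choose i : R) * (m.choose (k - i) : R) * r ^ i = 0 := by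
    intro i hik hij
    have hji : j < i := by grind
    simp [Nat.choose_eq_zero_of_lt hji]
  rw [Finset.sum_subset (Finset.range_mono (by omega)) summand_eq_zero, eigenPoly, mul_comm,
    coeff_mul, Finset.Nat.sum_antidiagonal_eq_sum_range_succ_mk, Finset.mul_sum]
  refine Finset.sum_congr rfl fun i hi => ?_
  have hp : p ^ k = p ^ i * p ^ (k - i) :=
    (pow_mul_pow_sub p (Nat.lt_succ_iff.mp (Finset.mem_range.mp hi))).symm
  simp only [coeff_one_add_C_mul_X_pow, mul_pow, hp]
  ring

end CommSemiring

section CommRing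

variable {R : Type*} [CommRing R]

/-- The matrix `B_N(a,b,c)` over an arbitrary commutative ring, a three-parameter version of the
Sylvester–Kac matrix. -/
def kacMatrix (N : ℕ) (a b c : R) : Matrix (Fin (N + 1)) (Fin (N + 1)) R :=
  Matrix.of fun k l =>
    if (l : ℕ) = (k : ℕ) + 1 then ((k : ℕ) + 1 : R) * a
    else if (l : ℕ) = (k : ℕ) then ((k : ℕ) : R) * b
    else if (l : ℕ) + 1 = (k : ℕ) then -((N - (k : ℕ) + 1 : ℕ) : R) * c
    else 0

/-- The differential operator `f ↦ (a + bX + cX²) f' - NcX f`. It preserves the polynomials of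
degree at most `N`, where its matrix in the monomial basis is `kacMatrix N a b c`. -/
noncomputable def kacOperator (N : ℕ) (a b c : R) : R[X] →ₗ[R] R[X] :=
  LinearMap.mulLeft R (C a + C b * X + C c * X ^ 2) ∘ₗ derivative -
    LinearMap.mulLeft R (C (N * c) * X)

lemma kacOperator_apply (N : ℕ) (a b c : R) (f : R[X]) :
    kacOperator N a b c f =
      (C a + C b * X + C c * X ^ 2) * derivative f - C (N * c) * X * f :=
  rfl

lemma kacOperator_X_pow (N : ℕ) (a b c : R) (l : ℕ) :
    kacOperator N a b c (X ^ l) =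
      C (l * a) * X ^ (l - 1) + C (l * b) * X ^ l - C ((N - l) * c) * X ^ (l + 1) := by
  cases l with
  | zero => simp [kacOperator_apply]
  | succ l =>
    simp only [kacOperator_apply, derivative_X_pow, Nat.add_sub_cancel, map_mul, map_sub]
    ring

lemma kacMatrix_apply_eq_coeff (N : ℕ) (a b c : R) (k l : Fin (N + 1)) :
    kacMatrix N a b c k l = (kacOperator N a b c (X ^ (l : ℕ))).coeff k := by
  have hcast : ((N - (k : ℕ) + 1 : ℕ) : R) = N - (k : ℕ) + 1 := by
    rw [Nat.cast_add, Nat.cast_sub k.is_le, Nat.cast_one]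
  simp only [kacMatrix, of_apply, hcast, kacOperator_X_pow, coeff_sub, coeff_add, coeff_C_mul,
    coeff_X_pow]
  clear hcast
  generalize (k : ℕ) = k, (l : ℕ) = l
  have hsuper : (l * a) * (if k = l - 1 then 1 else 0) = if l = k + 1 then (k + 1) * a else 0 := by
    cases l with
    | zero => simp
    | succ l => rcases eq_or_ne l k with rfl | h <;> simp [*, Ne.symm]
  rw [hsuper]
  split_ifs <;> first | omega | (subst_vars; push_cast; ring)

lemma kacMatrix_mulVec_coeff {N : ℕ} (a b c : R) {f : R[X]} (hf : f.natDegree ≤ N) :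
    kacMatrix N a b c *ᵥ (fun l => f.coeff l) =
      fun k : Fin (N + 1) => (kacOperator N a b c f).coeff k := by
  ext k
  have hsum : f = ∑ l : Fin (N + 1), f.coeff l • X ^ (l : ℕ) := by
    rw [Fin.sum_univ_eq_sum_range (fun l => f.coeff l • (X : R[X]) ^ l)]
    simpa only [smul_eq_C_mul] using f.as_sum_range_C_mul_X_pow' (Nat.lt_succ_of_le hf)
  conv_rhs => rw [hsum]
  simp only [mulVec, dotProduct, kacMatrix_apply_eq_coeff, map_sum, map_smul, finsetSum_coeff,
    coeff_smul, smul_eq_mul, mul_comm]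

lemma kacOperator_eigenPoly (a p q : R) (m j : ℕ) :
    kacOperator (m + j) a (a * (p + q)) (a * (p * q)) (eigenPoly p q m j) =
      (a * (m * p + j * q)) • eigenPoly p q m j := by
  have hp := one_add_C_mul_X_mul_derivative_pow p m
  have hq := one_add_C_mul_X_mul_derivative_pow q j
  simp only [kacOperator_apply, eigenPoly, derivative_mul, smul_eq_C_mul, map_mul, map_add,
    Nat.cast_add] at *
  linear_combination C a * (1 + C q * X) * (1 + C q * X) ^ j * hp +
    C a * (1 + C p * X) * (1 + C p * X) ^ m * hq

lemma kacMatrix_mulVec_coeff_eigenPoly {N m j : ℕ} {a b c p q : R} (hN : m + j = N)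
    (hb : a * (p + q) = b) (hc : a * (p * q) = c) :
    kacMatrix N a b c *ᵥ (fun l => (eigenPoly p q m j).coeff l) =
      (a * (m * p + j * q)) • fun l : Fin (N + 1) => (eigenPoly p q m j).coeff l := by
  subst hN hb hc
  rw [kacMatrix_mulVec_coeff _ _ _ (natDegree_eigenPoly_le p q m j), kacOperator_eigenPoly]
  ext k
  simp

end CommRing

section Field

variable {K : Type*} [Field K] [NeZero (2 : K)] {a b c s : K}

lemma add_ne_zero_of_sq_eq_discrim (ha : a ≠ 0) (hc : c ≠ 0) (hs : s ^ 2 = b ^ 2 - 4 * a * c) :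
    b + s ≠ 0 := by
  have hprod : (b + s) * (b - s) = 2 * 2 * a * c := by linear_combination -hs
  have hne : 2 * 2 * a * c ≠ 0 := by simp [ha, hc, two_ne_zero]
  exact left_ne_zero_of_mul (hprod ▸ hne)

lemma mul_two_mul_div_add_of_sq_eq_discrim (hs : s ^ 2 = b ^ 2 - 4 * a * c) (hbs : b + s ≠ 0) :
    a * (2 * c / (b + s)) = (b - s) / 2 := by
  field_simp
  linear_combination hs

theorem stmt_6_general (N : ℕ) (ha : a ≠ 0) (hc : c ≠ 0) (hs : s ^ 2 = b ^ 2 - 4 * a * c)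
    (v : Fin (N + 1) → Fin (N + 1) → K)
    (hv : ∀ j k, v j k = (2 * c / (b + s)) ^ (k : ℕ) *
        ∑ i ∈ Finset.range (min (k : ℕ) (j : ℕ) + 1),
          ((j : ℕ).choose i : K) * ((N - (j : ℕ)).choose ((k : ℕ) - i) : K) *
            ((b + s) / (b - s)) ^ i)
    (j : Fin (N + 1)) :
    v j 0 = 1 ∧ v j ≠ 0 ∧
      kacMatrix N a b c *ᵥ v j =
        ((j : ℕ) * ((b + s) / 2) + ((N : K) - (j : ℕ)) * ((b - s) / 2)) • v j := by
  have hs_neg : (-s) ^ 2 = b ^ 2 - 4 * a * c := by rw [neg_sq, hs]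
  have hadd : b + s ≠ 0 := add_ne_zero_of_sq_eq_discrim ha hc hs
  have hsub : b + -s ≠ 0 := add_ne_zero_of_sq_eq_discrim ha hc hs_neg
  have hap := mul_two_mul_div_add_of_sq_eq_discrim hs hadd
  have haq := mul_two_mul_div_add_of_sq_eq_discrim hs_neg hsub
  rw [← sub_eq_add_neg] at hsub
  rw [← sub_eq_add_neg, sub_neg_eq_add] at haq
  have hv_zero : v j 0 = 1 := by simp [hv]
  refine ⟨hv_zero, fun h => by simp [h] at hv_zero, ?_⟩
  set p := 2 * c / (b + s) with hp
  set q := 2 * c / (b - s) with hq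
  have hpq : p * ((b + s) / (b - s)) = q := by rw [hp, hq]; field_simp
  have hb : a * (p + q) = b := by grind
  have hapq : a * (p * q) = c := by rw [← mul_assoc, hap, hq]; field_simp
  have hvj : v j = fun k : Fin (N + 1) => (eigenPoly p q (N - j) j).coeff k := by
    ext k
    rw [hv, ← hpq, coeff_eigenPoly_mul]
  rw [hvj, kacMatrix_mulVec_coeff_eigenPoly (Nat.sub_add_cancel j.is_le) hb hapq,
    Nat.cast_sub j.is_le]
  congr 1
  linear_combination ((N : K) - (j : ℕ)) * hap + (j : ℕ) * haq

end Field

theorem stmt_6 (N : ℕ) (hN : 1 ≤ N) (a b c : ℂ) (ha : a ≠ 0) (hc : c ≠ 0)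
    (s : ℂ) (hs : s ^ 2 = b ^ 2 - 4 * a * c) (hs0 : s ≠ 0)
    (v : Fin (N+1) → Fin (N+1) → ℂ)
    (hv : ∀ j k, v j k = (2 * c / (b + s)) ^ (k : ℕ) *
        ∑ i ∈ Finset.range (min (k : ℕ) (j : ℕ) + 1),
          ((j : ℕ).choose i : ℂ) * ((N - (j : ℕ)).choose ((k : ℕ) - i) : ℂ) *
            ((b + s) / (b - s)) ^ i) :
    ∀ j : Fin (N+1), v j 0 = 1 ∧ v j ≠ 0 ∧
      (Bmat N a b c).mulVec (v j) =
        ((j : ℕ) * ((b + s) / 2) + ((N : ℂ) - (j : ℕ)) * ((b - s) / 2)) • v j :=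
  stmt_6_general N ha hc hs v hv
end

section
/- Let N ≥ 1. For each j ∈ {0, …, N}, the vector v_j ∈ ℂ^{N+1} (or ℚ^{N+1}) with entries v_j[k] = Σ_{i=0}^{min(k,j)} (−1)^{k−i}·C(j,i)·C(N−j, k−i), k = 0, …, N, is nonzero (v_j[0] = 1) and satisfies K_N · v_j = (2j − N) · v_j. In particular, the eigenvalues of the Sylvester–Kac matrix K_N are exactly the N+1 integers −N, −N+2, …, N−2, N. -/
open Matrix

/-- The Sylvester–Kac matrix `K_N` over `ℚ`. -/
def Kmat (N : ℕ) : Matrix (Fin (N+1)) (Fin (N+1)) ℚ :=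
  Matrix.of fun k l =>
    if (l : ℕ) = (k : ℕ) + 1 then ((k : ℕ) + 1 : ℚ)
    else if (l : ℕ) + 1 = (k : ℕ) then ((N - (k : ℕ) + 1 : ℕ) : ℚ)
    else 0

/-!
The matrix `K_N` is the matrix, in the monomial basis, of the operator
`p ↦ (1 - X²) p' + N X p` on polynomials of degree at most `N`. By the Leibniz rule, the product of
eigenvectors of the operators with parameters `c` and `d` is an eigenvector of the one with
parameter `c + d`, and the eigenvalues add. For parameter `1` the polynomials `1 + X` and `1 - X`
have eigenvalues `1` and `-1`, so `(1 + X)^j (1 - X)^(N - j)`, whose coefficients are the entries of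
`v_j`, has eigenvalue `2j - N`. These are `N + 1` distinct values in dimension `N + 1`, hence all of
the eigenvalues.
-/

open Polynomial

section Eigenvalues

variable {R M ι : Type*} [CommRing R]

lemma hasEigenvalue_iff_mem_range_of_finrank_le_card [IsDomain R] [AddCommGroup M] [Module R M]
    [Module.IsTorsionFree R M] [Module.Finite R M] [Fintype ι] {f : Module.End R M} {μ : ι → R}
    (hμ : Function.Injective μ) (hf : ∀ i, f.HasEigenvalue (μ i))
    (hcard : Module.finrank R M ≤ Fintype.card ι) {x : R} :
    f.HasEigenvalue x ↔ x ∈ Set.range μ := by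
  refine ⟨fun hx => ?_, ?_⟩
  · by_contra hxμ
    let ν : Option ι → R := fun o => o.elim x μ
    have hν : Function.Injective ν := Option.injective_iff.2 ⟨hμ, hxμ⟩
    have hfν : ∀ o, f.HasEigenvalue (ν o) := Option.forall.2 ⟨hx, hf⟩
    choose w hw using fun o => (hfν o).exists_hasEigenvector
    have hle : Fintype.card (Option ι) ≤ Module.finrank R M :=
      (Module.End.eigenvectors_linearIndependent' f ν hν w hw).fintype_card_le_finrank
    rw [Fintype.card_option] at hle
    lia
  · rintro ⟨i, rfl⟩
    exact hf i

lemma hasEigenvalue_toLin'_iff [Fintype ι] [DecidableEq ι] {A : Matrix ι ι R} {x : R} :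
    Module.End.HasEigenvalue (Matrix.toLin' A) x ↔ ∃ u : ι → R, u ≠ 0 ∧ A *ᵥ u = x • u := by
  simp only [Module.End.hasEigenvalue_iff, Submodule.ne_bot_iff, Module.End.mem_eigenspace_iff,
    Matrix.toLin'_apply, and_comm]

end Eigenvalues

section Polynomials

variable {R : Type*} [CommRing R]

lemma coeff_one_sub_X_pow (n k : ℕ) :
    ((1 - X : R[X]) ^ n).coeff k = (-1) ^ k * (n.choose k : R) := by
  have hcomp : (1 - X : R[X]) ^ n = ((1 + X) ^ n).comp (C (-1) * X) := by
    simp [sub_eq_add_neg]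
  rw [hcomp, comp_C_mul_X_coeff, coeff_one_add_X_pow, mul_comm]

/-- The operator `p ↦ (1 - X²) p' + c X p`. For `c = N` it preserves the polynomials of degree at
most `N`, where its matrix in the monomial basis is the Sylvester–Kac matrix `Kmat N`. -/
noncomputable def kacOp (c : R) (p : R[X]) : R[X] :=
  (1 - X ^ 2) * derivative p + C c * X * p

lemma coeff_kacOp_zero (c : R) (p : R[X]) : (kacOp c p).coeff 0 = p.coeff 1 := by
  simp [kacOp, mul_coeff_zero, coeff_derivative]

lemma coeff_kacOp_succ (c : R) (p : R[X]) (k : ℕ) :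
    (kacOp c p).coeff (k + 1) = (k + 2) * p.coeff (k + 2) + (c - k) * p.coeff k := by
  have hX : (X ^ 2 * derivative p).coeff (k + 1) = k * p.coeff k := by
    rw [pow_two, mul_assoc, coeff_X_mul]
    cases k with
    | zero => simp
    | succ k => rw [coeff_X_mul, coeff_derivative]; push_cast; ring
  rw [kacOp, sub_mul, one_mul, coeff_add, coeff_sub, hX, coeff_derivative, mul_assoc, coeff_C_mul,
    coeff_X_mul]
  push_cast
  ring

lemma kacOp_mul (c d : R) (p q : R[X]) :
    kacOp (c + d) (p * q) = kacOp c p * q + p * kacOp d q := by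
  simp only [kacOp, derivative_mul, C_add]
  ring

lemma kacOp_mul_eq_C_mul {c d μ ν : R} {p q : R[X]} (hp : kacOp c p = C μ * p)
    (hq : kacOp d q = C ν * q) : kacOp (c + d) (p * q) = C (μ + ν) * (p * q) := by
  rw [kacOp_mul, hp, hq, C_add]
  ring

lemma kacOp_pow_eq_C_mul {c μ : R} {p : R[X]} (hp : kacOp c p = C μ * p) (n : ℕ) :
    kacOp (n * c) (p ^ n) = C (n * μ) * p ^ n := by
  induction n with
  | zero => simp [kacOp]
  | succ n ih =>
    simpa only [pow_succ, Nat.cast_succ, add_one_mul] using kacOp_mul_eq_C_mul ih hp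

lemma kacOp_one_add_X : kacOp (1 : R) (1 + X) = C 1 * (1 + X) := by
  simp only [kacOp, derivative_add, derivative_one, derivative_X, C_1]
  ring

lemma kacOp_one_sub_X : kacOp (1 : R) (1 - X) = C (-1) * (1 - X) := by
  simp only [kacOp, derivative_sub, derivative_one, derivative_X, C_neg, C_1]
  ring

variable (R) in
/-- The generating polynomial of the entries of the eigenvector of `Kmat (a + b)` with eigenvalue
`a - b`; the vector `v_j` of the theorem corresponds to `a = j` and `b = N - j`. -/
noncomputable def kacPoly (a b : ℕ) : R[X] := (1 + X) ^ a * (1 - X) ^ b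

lemma natDegree_kacPoly_le (a b : ℕ) : (kacPoly R a b).natDegree ≤ a + b := by
  have hadd : (1 + X : R[X]).natDegree ≤ 1 := by compute_degree
  have hsub : (1 - X : R[X]).natDegree ≤ 1 := by compute_degree
  simpa only [kacPoly, mul_one] using
    natDegree_mul_le_of_le (natDegree_pow_le_of_le a hadd) (natDegree_pow_le_of_le b hsub)

lemma coeff_kacPoly (a b k : ℕ) :
    (kacPoly R a b).coeff k = ∑ i ∈ Finset.range (min k a + 1),
      (-1) ^ (k - i) * (a.choose i : R) * (b.choose (k - i) : R) := by
  have hconv : (kacPoly R a b).coeff k = ∑ i ∈ Finset.range (k + 1),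
      (-1) ^ (k - i) * (a.choose i : R) * (b.choose (k - i) : R) := by
    rw [kacPoly, coeff_mul, Finset.Nat.sum_antidiagonal_eq_sum_range_succ_mk]
    refine Finset.sum_congr rfl fun i _ => ?_
    rw [coeff_one_add_X_pow, coeff_one_sub_X_pow]
    ring
  rw [hconv]
  refine (Finset.sum_subset (Finset.range_subset_range.2 (by lia)) fun i hik hia => ?_).symm
  simp only [Finset.mem_range] at hik hia
  simp [Nat.choose_eq_zero_of_lt (show a < i by lia)]

lemma kacOp_kacPoly (a b : ℕ) :
    kacOp (a + b : R) (kacPoly R a b) = C (a - b : R) * kacPoly R a b := by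
  have hadd := kacOp_pow_eq_C_mul (kacOp_one_add_X (R := R)) a
  have hsub := kacOp_pow_eq_C_mul (kacOp_one_sub_X (R := R)) b
  simpa only [kacPoly, mul_one, mul_neg, ← sub_eq_add_neg] using kacOp_mul_eq_C_mul hadd hsub

end Polynomials

section KacMatrix

lemma Kmat_apply_eq_add {N : ℕ} (k l : Fin (N + 1)) :
    Kmat N k l = (if (l : ℕ) = k + 1 then (k + 1 : ℚ) else 0) +
      if (l : ℕ) + 1 = k then (N - k + 1 : ℚ) else 0 := by
  have hcast : ((N - (k : ℕ) + 1 : ℕ) : ℚ) = N - k + 1 := by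
    rw [Nat.cast_add, Nat.cast_sub k.is_le, Nat.cast_one]
  rw [Kmat, Matrix.of_apply, hcast]
  split_ifs <;> first | lia | simp

lemma Kmat_mulVec_coeff {N : ℕ} {p : ℚ[X]} (hp : p.natDegree ≤ N) :
    (Kmat N *ᵥ fun l => p.coeff l) = fun k : Fin (N + 1) => (kacOp (N : ℚ) p).coeff k := by
  have hN : p.coeff (N + 1) = 0 := coeff_eq_zero_of_natDegree_lt (by lia)
  ext ⟨k, hk⟩
  have hsuper : ∑ l ∈ Finset.range (N + 1), (if l = k + 1 then (k + 1 : ℚ) else 0) * p.coeff l =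
      (k + 1) * p.coeff (k + 1) := by
    simp only [ite_mul, zero_mul, Finset.sum_ite_eq', Finset.mem_range, ite_eq_left_iff]
    intro hkN
    rw [show k = N by lia, hN, mul_zero]
  simp only [Matrix.mulVec, dotProduct, Kmat_apply_eq_add]
  rw [Fin.sum_univ_eq_sum_range (fun l => ((if l = k + 1 then (k + 1 : ℚ) else 0) +
    if l + 1 = k then (N - k + 1 : ℚ) else 0) * p.coeff l) (N + 1)]
  simp only [add_mul, Finset.sum_add_distrib, hsuper]
  cases k with
  | zero => simp [coeff_kacOp_zero]
  | succ m =>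
    have hm : m < N + 1 := by lia
    simp only [add_left_inj, ite_mul, zero_mul, Finset.sum_ite_eq', Finset.mem_range, if_pos hm,
      coeff_kacOp_succ]
    push_cast
    ring

lemma Kmat_mulVec_coeff_kacPoly {N j : ℕ} (hj : j ≤ N) :
    (Kmat N *ᵥ fun k => (kacPoly ℚ j (N - j)).coeff k) =
      (2 * j - N : ℚ) • fun k : Fin (N + 1) => (kacPoly ℚ j (N - j)).coeff k := by
  have hdeg : (kacPoly ℚ j (N - j)).natDegree ≤ N :=
    (natDegree_kacPoly_le j (N - j)).trans_eq (Nat.add_sub_of_le hj)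
  have hop : kacOp (N : ℚ) (kacPoly ℚ j (N - j)) = C (2 * j - N : ℚ) * kacPoly ℚ j (N - j) := by
    convert kacOp_kacPoly (R := ℚ) j (N - j) using 3 <;> push_cast [hj] <;> ring
  rw [Kmat_mulVec_coeff hdeg, hop]
  ext k
  simp only [coeff_C_mul, Pi.smul_apply, smul_eq_mul]

end KacMatrix

theorem stmt_7 (N : ℕ) (hN : 1 ≤ N)
    (v : Fin (N+1) → Fin (N+1) → ℚ)
    (hv : ∀ j k, v j k = ∑ i ∈ Finset.range (min (k : ℕ) (j : ℕ) + 1),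
        (-1 : ℚ) ^ ((k : ℕ) - i) * ((j : ℕ).choose i : ℚ) *
          ((N - (j : ℕ)).choose ((k : ℕ) - i) : ℚ)) :
    (∀ j, v j 0 = 1 ∧ v j ≠ 0 ∧
        (Kmat N).mulVec (v j) = (2 * (j : ℕ) - (N : ℚ)) • v j) ∧
      (∀ x : ℚ, (∃ u : Fin (N+1) → ℚ, u ≠ 0 ∧ (Kmat N).mulVec u = x • u) ↔
        ∃ j : Fin (N+1), x = 2 * (j : ℕ) - (N : ℚ)) := by
  have heig : ∀ j, v j 0 = 1 ∧ v j ≠ 0 ∧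
      (Kmat N).mulVec (v j) = (2 * (j : ℕ) - (N : ℚ)) • v j := by
    intro j
    have hv0 : v j 0 = 1 := by simp [hv]
    have hvj : v j = fun k : Fin (N + 1) => (kacPoly ℚ j (N - j)).coeff k := by
      ext k
      rw [hv, coeff_kacPoly]
    exact ⟨hv0, fun h => by simp [h] at hv0, hvj ▸ Kmat_mulVec_coeff_kacPoly j.is_le⟩
  have hinj : Function.Injective fun j : Fin (N + 1) => 2 * (j : ℕ) - (N : ℚ) := fun i j hij => by
    simpa [Fin.ext_iff] using hij
  refine ⟨heig, fun x => ?_⟩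
  rw [← hasEigenvalue_toLin'_iff, hasEigenvalue_iff_mem_range_of_finrank_le_card hinj
    (fun j => hasEigenvalue_toLin'_iff.2 ⟨v j, (heig j).2⟩) (by simp)]
  simp only [Set.mem_range, eq_comm]
end

section
/- For every N ≥ 1 and all a, c ∈ ℂ, the characteristic polynomial of the matrix B_N(a, −(a+c), c) factors as det(x·I_{N+1} − B_N(a, −(a+c), c)) = Π_{j=0}^{N} (x + j·a + (N−j)·c) as polynomials in x over ℂ. -/
open Matrix Polynomial

/-!
In the monomial basis, `B_N(a, b, c)` is the matrix of the operator
`f ↦ (a + b t + c t²) df/dt - N c t f` on polynomials of degree at most `N`. The translation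
`t ↦ t + s` conjugates this operator into the one whose quadratic is `a + b (t + s) + c (t + s)²`,
up to the scalar `N c s`. If `s` is a root of `a + b t + c t²`, the new constant coefficient
vanishes, the matrix becomes lower triangular, and its diagonal gives the characteristic polynomial.
For `b = -(a + c)` one such root is `s = 1`.
-/

lemma charpoly_of_isLowerTriangular {R n : Type*} [CommRing R] [Fintype n] [LinearOrder n]
    (M : Matrix n n R) (hM : M.IsLowerTriangular) : M.charpoly = ∏ i, (X - C (M i i)) := by
  simp [Matrix.charpoly, det_of_isLowerTriangular _ hM.charmatrix]

section BinaryForm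

variable {R : Type*} [CommRing R] (N : ℕ) (a b c : R)

/-- The action of the derivation `-c y ∂/∂x + (a x + b y) ∂/∂y` on binary forms of degree `N`,
dehomogenized at `x = 1`, `y = X`. It is defined on all polynomials, but preserves only the space
of those of degree at most `N`. -/
noncomputable def binaryFormOperator : R[X] →ₗ[R] R[X] :=
  LinearMap.mulLeft R (C a + C b * X + C c * X ^ 2) ∘ₗ derivative -
    LinearMap.mulLeft R (C (N * c) * X)

lemma binaryFormOperator_apply (f : R[X]) :
    binaryFormOperator N a b c f =
      (C a + C b * X + C c * X ^ 2) * derivative f - C (N * c) * X * f :=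
  rfl

lemma coeff_zero_binaryFormOperator (f : R[X]) :
    (binaryFormOperator N a b c f).coeff 0 = a * f.coeff 1 := by
  simp [binaryFormOperator_apply, mul_coeff_zero, coeff_derivative]

lemma coeff_succ_binaryFormOperator (f : R[X]) (k : ℕ) :
    (binaryFormOperator N a b c f).coeff (k + 1) =
      (k + 2) * a * f.coeff (k + 2) + (k + 1) * b * f.coeff (k + 1) + (k - N) * c * f.coeff k := by
  have coeff_X_sq_mul_derivative : (X ^ 2 * derivative f).coeff (k + 1) = k * f.coeff k := by
    cases k <;> simp [pow_two, mul_assoc, coeff_X_mul, coeff_derivative, mul_comm]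
  simp only [binaryFormOperator_apply, add_mul, mul_assoc, coeff_sub, coeff_add, coeff_C_mul,
    coeff_X_mul, coeff_X_sq_mul_derivative, coeff_derivative]
  push_cast
  ring

lemma coeff_binaryFormOperator_X_pow (k l : ℕ) :
    (binaryFormOperator N a b c (X ^ l)).coeff k =
      if l = k + 1 then (k + 1) * a
      else if l = k then k * b
      else if l + 1 = k then (l - N) * c
      else 0 := by
  cases k with
  | zero => simp [coeff_zero_binaryFormOperator, coeff_X_pow, eq_comm]
  | succ k =>
    simp only [coeff_succ_binaryFormOperator, coeff_X_pow]
    push_cast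
    grind

lemma binaryFormOperator_mem_degreeLT {f : R[X]} (hf : f ∈ degreeLT R (N + 1)) :
    binaryFormOperator N a b c f ∈ degreeLT R (N + 1) := by
  rw [mem_degreeLT, degree_lt_iff_coeff_zero] at hf ⊢
  intro m hm
  obtain ⟨k, rfl⟩ := Nat.exists_eq_add_one_of_ne_zero (by omega : m ≠ 0)
  rw [coeff_succ_binaryFormOperator, hf (k + 1) hm, hf (k + 2) (by omega)]
  obtain rfl | hk := eq_or_lt_of_le (Nat.le_of_succ_le_succ hm)
  · simp
  · simp [hf k hk]

lemma taylor_binaryFormOperator (s : R) (f : R[X]) :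
    taylor s (binaryFormOperator N a b c f) =
      binaryFormOperator N (a + b * s + c * s ^ 2) (b + 2 * c * s) c (taylor s f) -
        (N * c * s) • taylor s f := by
  have taylor_derivative : taylor s (derivative f) = derivative (taylor s f) := by
    simp [taylor_apply, derivative_comp]
  simp only [binaryFormOperator_apply, map_sub, map_add, taylor_mul, taylor_pow, taylor_C, taylor_X,
    taylor_derivative, smul_eq_C_mul, C_mul, C_pow, C_ofNat]
  ring

/-- The restriction of `binaryFormOperator` to the polynomials of degree at most `N`. -/
noncomputable def binaryFormEnd : Module.End R (degreeLT R (N + 1)) :=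
  (binaryFormOperator N a b c).restrict fun _ => binaryFormOperator_mem_degreeLT N a b c

lemma toMatrix_binaryFormEnd_apply (k l : Fin (N + 1)) :
    LinearMap.toMatrix (degreeLT.basis R (N + 1)) (degreeLT.basis R (N + 1))
        (binaryFormEnd N a b c) k l = (binaryFormOperator N a b c (X ^ (l : ℕ))).coeff k := by
  rw [LinearMap.toMatrix_apply, degreeLT.basis_repr, binaryFormEnd, LinearMap.coe_restrict_apply,
    degreeLT.basis_val]

lemma conj_taylorLinearEquiv_binaryFormEnd (s : R) :
    (taylorLinearEquiv s (N + 1)).conj (binaryFormEnd N a b c) =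
      binaryFormEnd N (a + b * s + c * s ^ 2) (b + 2 * c * s) c - (N * c * s) • 1 := by
  rw [LinearEquiv.conj_apply, LinearEquiv.comp_toLinearMap_symm_eq]
  ext f : 2
  exact taylor_binaryFormOperator N a b c s f

lemma charpoly_binaryFormEnd_eq_comp (s : R) :
    (binaryFormEnd N a b c).charpoly =
      (binaryFormEnd N (a + b * s + c * s ^ 2) (b + 2 * c * s) c).charpoly.comp
        (X + C (N * c * s)) := by
  rw [← LinearMap.charpoly_sub_smul, ← conj_taylorLinearEquiv_binaryFormEnd,
    LinearEquiv.charpoly_conj]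

lemma charpoly_binaryFormEnd_zero :
    (binaryFormEnd N 0 b c).charpoly = ∏ j : Fin (N + 1), (X - C ((j : ℕ) * b)) := by
  rw [← LinearMap.charpoly_toMatrix _ (degreeLT.basis R (N + 1)), charpoly_of_isLowerTriangular]
  · simp [toMatrix_binaryFormEnd_apply, coeff_binaryFormOperator_X_pow]
  · intro k l (hkl : k < l)
    rw [toMatrix_binaryFormEnd_apply, coeff_binaryFormOperator_X_pow, mul_zero,
      if_neg (by omega : (l : ℕ) ≠ k), if_neg (by omega : (l : ℕ) + 1 ≠ k), ite_self]

theorem stmt_8_general {a b c s : R} (hs : a + b * s + c * s ^ 2 = 0) :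
    (binaryFormEnd N a b c).charpoly =
      ∏ j : Fin (N + 1), (X + C (N * c * s - (j : ℕ) * (b + 2 * c * s))) := by
  rw [charpoly_binaryFormEnd_eq_comp N a b c s, hs, charpoly_binaryFormEnd_zero, prod_comp]
  refine Finset.prod_congr rfl fun j _ => ?_
  simp only [sub_comp, X_comp, C_comp, C_sub]
  ring

end BinaryForm

lemma Bmat_eq_toMatrix_binaryFormEnd (N : ℕ) (a b c : ℂ) :
    Bmat N a b c = LinearMap.toMatrix (degreeLT.basis ℂ (N + 1)) (degreeLT.basis ℂ (N + 1))
      (binaryFormEnd N a b c) := by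
  ext k l
  rw [toMatrix_binaryFormEnd_apply, coeff_binaryFormOperator_X_pow, Bmat, of_apply]
  congr! 4
  rw [show N - (k : ℕ) + 1 = N - l by omega, Nat.cast_sub (by omega), neg_sub]

theorem stmt_8 (N : ℕ) (hN : 1 ≤ N) (a c : ℂ) :
    (Bmat N a (-(a + c)) c).charpoly =
      ∏ j : Fin (N+1),
        (X + C ((j : ℕ) * a + ((N : ℂ) - (j : ℕ)) * c)) := by
  rw [Bmat_eq_toMatrix_binaryFormEnd, LinearMap.charpoly_toMatrix,
    stmt_8_general N (s := 1) (by ring)]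
  exact Finset.prod_congr rfl fun j _ => by congr 2; ring
end

section
/- For every N ∈ ℕ, let M_{N+1} denote the (N+2)×(N+2) leading principal submatrix of the Sylvester–Kac matrix K_{2N+2}, i.e. the matrix indexed by k, l ∈ {0, …, N+1} with M_{N+1}[k, k+1] = k+1, M_{N+1}[k, k−1] = 2N+3−k, and 0 otherwise. Then det(x·I_{N+2} − S_{N+1}) = 2·det(x·I_{N+2} − M_{N+1}) − x·det(x·I_{N+1} − G_N) as polynomials in x. -/
open Matrix Polynomial

/-- The matrix `G_N`, over `ℚ`. -/
def Gmat (N : ℕ) : Matrix (Fin (N+1)) (Fin (N+1)) ℚ :=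
  Matrix.of fun k l =>
    if (l : ℕ) = (k : ℕ) + 1 then ((k : ℕ) + 1 : ℚ)
    else if (l : ℕ) + 1 = (k : ℕ) then ((2 * N + 3 - (k : ℕ) : ℕ) : ℚ)
    else 0

/-- The matrix `S_N`, over `ℚ`. -/
def Smat (N : ℕ) : Matrix (Fin (N+1)) (Fin (N+1)) ℚ :=
  Matrix.of fun k l =>
    if (l : ℕ) = (k : ℕ) + 1 then
      (if (k : ℕ) = N - 1 then (2 * N : ℚ) else ((k : ℕ) + 1 : ℚ))
    else if (l : ℕ) + 1 = (k : ℕ) then ((2 * N + 1 - (k : ℕ) : ℕ) : ℚ)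
    else 0

/-- The `(N+2)×(N+2)` leading principal submatrix `M_{N+1}` of `K_{2N+2}`, over `ℚ`. -/
def Mmat (N : ℕ) : Matrix (Fin (N+2)) (Fin (N+2)) ℚ :=
  Matrix.of fun k l =>
    if (l : ℕ) = (k : ℕ) + 1 then ((k : ℕ) + 1 : ℚ)
    else if (l : ℕ) + 1 = (k : ℕ) then ((2 * N + 3 - (k : ℕ) : ℕ) : ℚ)
    else 0

/-!
`S_{N+1}` is `M_{N+1}` with its last column doubled. Scaling column `i` of `A` by `c` changes that
column of `X • 1 - A` from `X • e_i - a` to `c • (X • e_i - a) - (c - 1) • X • e_i`, so the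
determinant splits by linearity in the column. With `e_i` in column `i`, it is the characteristic
polynomial of `A` with row and column `i` deleted. For `c = 2`, `A = M_{N+1}` and the last index,
that smaller matrix is `G_N`.
-/

section CommRing

variable {R : Type*} [CommRing R]

theorem det_updateCol_single_one {n : ℕ} (A : Matrix (Fin (n + 1)) (Fin (n + 1)) R)
    (i j : Fin (n + 1)) :
    (A.updateCol j (Pi.single i 1)).det =
      (-1) ^ (i + j : ℕ) * (A.submatrix i.succAbove j.succAbove).det := by
  rw [← cramer_apply, cramer_eq_adjugate_mulVec, mulVec_single_one, col_apply,
    adjugate_fin_succ_eq_det_submatrix]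

theorem charmatrix_submatrix {m n : Type*} [Fintype m] [DecidableEq m] [Fintype n] [DecidableEq n]
    (A : Matrix n n R) {e : m → n} (he : Function.Injective e) :
    charmatrix (A.submatrix e e) = (charmatrix A).submatrix e e := by
  ext1 k l
  simp [charmatrix_apply, diagonal_apply, he.eq_iff]

theorem charmatrix_updateCol {n : Type*} [Fintype n] [DecidableEq n] (A : Matrix n n R)
    (j : n) (v : n → R) :
    charmatrix (A.updateCol j v) = (charmatrix A).updateCol j (Pi.single j X - C ∘ v) := by
  ext1 k l
  obtain rfl | hl := eq_or_ne l j
  · simp [charmatrix_apply, diagonal_apply, Pi.single_apply]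
  · simp [charmatrix_apply, hl]

theorem charpoly_updateCol_smul_col {n : ℕ} (A : Matrix (Fin (n + 1)) (Fin (n + 1)) R)
    (i : Fin (n + 1)) (c : R) :
    (A.updateCol i (c • A.col i)).charpoly =
      C c * A.charpoly - C (c - 1) * X * (A.submatrix i.succAbove i.succAbove).charpoly := by
  have scaled_col : (Pi.single i X - C ∘ (c • A.col i) : Fin (n + 1) → R[X]) =
      C c • (charmatrix A).col i + (-(C (c - 1) * X)) • Pi.single i 1 := by
    ext1 k
    simp only [Pi.sub_apply, Pi.single_apply, Function.comp_apply, Pi.smul_apply, col_apply,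
      smul_eq_mul, map_mul, map_sub, map_one, neg_smul, Pi.add_apply, charmatrix_apply,
      diagonal_apply, Pi.neg_apply, mul_ite, mul_one, mul_zero]
    split_ifs <;> ring
  have det_unit_col : ((charmatrix A).updateCol i (Pi.single i 1)).det =
      (A.submatrix i.succAbove i.succAbove).charpoly := by
    rw [det_updateCol_single_one, Even.neg_one_pow ⟨_, rfl⟩, one_mul,
      ← charmatrix_submatrix A Fin.succAbove_right_injective, charpoly]
  have same_col : (charmatrix A).updateCol i ((charmatrix A).col i) = charmatrix A :=
    updateCol_eq_self _ i
  rw [charpoly, charmatrix_updateCol, scaled_col, det_updateCol_add, det_updateCol_smul,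
    det_updateCol_smul, same_col, det_unit_col, ← charpoly, neg_mul, ← sub_eq_add_neg]

end CommRing

theorem Mmat_submatrix_castSucc (N : ℕ) :
    (Mmat N).submatrix Fin.castSucc Fin.castSucc = Gmat N :=
  rfl

theorem Smat_succ_eq_updateCol_Mmat (N : ℕ) :
    Smat (N + 1) = (Mmat N).updateCol (Fin.last _) ((2 : ℚ) • (Mmat N).col (Fin.last _)) := by
  ext k l
  have same_subdiagonal : 2 * (N + 1) + 1 = 2 * N + 3 := rfl
  obtain rfl | hl := eq_or_ne l (Fin.last (N + 1))
  · have no_subdiagonal : N + 1 + 1 ≠ (k : ℕ) := k.isLt.ne'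
    by_cases hk : (k : ℕ) = N
    · simp [Smat, Mmat, hk]
    · simp [Smat, Mmat, no_subdiagonal, Ne.symm hk]
  · have not_last_superdiagonal : (l : ℕ) = k + 1 → (k : ℕ) ≠ N := fun h hk =>
      hl (Fin.ext (by rw [h, hk, Fin.val_last]))
    rw [updateCol_ne hl]
    simp only [Smat, Mmat, of_apply, Nat.add_sub_cancel, same_subdiagonal]
    split_ifs <;> simp_all

theorem stmt_15 (N : ℕ) :
    (Smat (N + 1)).charpoly = 2 * (Mmat N).charpoly - X * (Gmat N).charpoly := by
  have two_sub_one : (2 - 1 : ℚ) = 1 := by norm_num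
  rw [Smat_succ_eq_updateCol_Mmat, charpoly_updateCol_smul_col, Fin.succAbove_last,
    Mmat_submatrix_castSucc, two_sub_one, C_1, one_mul, C_ofNat]
end

section
/- Let N ≥ 1, let H_N = (1/2)·S_N as a matrix over ℚ, and let E_N be the (N+1)×(N+1) reversal matrix with entries E_N[i, j] = 1 if j = N−i and 0 otherwise (so E_N² = I). Then H_N^T · E_N = E_N · (2·C_N(−1/2) − N·I_{N+1}); equivalently, H_N^T = E_N · (2·C_N(−1/2) − N·I_{N+1}) · E_N^{-1}. -/
open Matrix

/-- The tridiagonal matrix `C_N(a)` of three-term recurrence coefficients of the Hahn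
polynomials with equal parameters `α = β = a`, over `ℚ`. -/
def Cmat (N : ℕ) (a : ℚ) : Matrix (Fin (N+1)) (Fin (N+1)) ℚ :=
  Matrix.of fun i l =>
    if (l : ℕ) = (i : ℕ) then (N : ℚ) / 2
    else if (l : ℕ) = (i : ℕ) + 1 then
      (if (i : ℕ) = 0 then (N : ℚ) / 2
       else (((i : ℕ) : ℚ) + 2 * a + 1) * ((N : ℚ) - ((i : ℕ) : ℚ)) /
         (2 * (2 * ((i : ℕ) : ℚ) + 2 * a + 1)))
    else if (l : ℕ) + 1 = (i : ℕ) then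
      ((i : ℕ) : ℚ) * (((i : ℕ) : ℚ) + 2 * a + (N : ℚ) + 1) /
        (2 * (2 * ((i : ℕ) : ℚ) + 2 * a + 1))
    else 0

/-- The reversal (anti-identity) matrix `E_N`, over `ℚ`. -/
def Emat (N : ℕ) : Matrix (Fin (N+1)) (Fin (N+1)) ℚ :=
  Matrix.of fun i j => if (i : ℕ) + (j : ℕ) = N then 1 else 0

/-!
Transposing a matrix and conjugating it by `E_N` preserves tridiagonality: it reverses the order of
each of the three diagonals without exchanging the lower and the upper one. At `a = -1/2` the
denominators `2i + 2a + 1 = 2i` in `C_N(a)` cancel against `i + 2a + 1 = i` above the diagonal and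
against `i` below it (only the entry at `(0, 1)` is exceptional, the formula there being `0 / 0`).
Hence `2 C_N(-1/2) - N` has upper diagonal `N, (N-1)/2, (N-2)/2, …, 1/2` and lower diagonal
`(N+1)/2, …, (2N)/2`, which are the diagonals of `S_N / 2` read backwards.
-/

section Tridiagonal

variable {R : Type*}

/-- The `n × n` tridiagonal matrix with lower, main and upper diagonals `l`, `d`, `u`. Each diagonal
is numbered from its top left end, so `l i` is the entry at `(i + 1, i)` and `u i` the entry at
`(i, i + 1)`. -/
def tridiagonal [Zero R] (n : ℕ) (l d u : ℕ → R) : Matrix (Fin n) (Fin n) R :=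
  Matrix.of fun i j =>
    if (j : ℕ) = i then d i
    else if (j : ℕ) = i + 1 then u i
    else if (j : ℕ) + 1 = i then l j
    else 0

theorem tridiagonal_congr [Zero R] {n : ℕ} {l l' d d' u u' : ℕ → R}
    (hl : ∀ i, i + 1 < n → l i = l' i) (hd : ∀ i < n, d i = d' i)
    (hu : ∀ i, i + 1 < n → u i = u' i) :
    tridiagonal n l d u = tridiagonal n l' d' u' := by
  ext i j
  simp only [tridiagonal, of_apply]
  split_ifs with hdiag hupper hlower
  · exact hd i i.isLt
  · exact hu i (hupper ▸ j.isLt)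
  · exact hl j (hlower ▸ i.isLt)
  · rfl

theorem transpose_tridiagonal [Zero R] (n : ℕ) (l d u : ℕ → R) :
    (tridiagonal n l d u)ᵀ = tridiagonal n u d l := by
  ext i j
  simp only [tridiagonal, transpose_apply, of_apply]
  grind

theorem submatrix_rev_tridiagonal [Zero R] (n : ℕ) (l d u : ℕ → R) :
    (tridiagonal n l d u).submatrix Fin.rev Fin.rev =
      tridiagonal n (fun i => u (n - (i + 2))) (fun i => d (n - (i + 1)))
        (fun i => l (n - (i + 2))) := by
  ext i j
  simp only [tridiagonal, submatrix_apply, of_apply, Fin.val_rev]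
  grind

theorem smul_tridiagonal {S : Type*} [Zero R] [SMulZeroClass S R] (c : S) (n : ℕ)
    (l d u : ℕ → R) :
    c • tridiagonal n l d u = tridiagonal n (c • l) (c • d) (c • u) := by
  ext i j
  simp only [tridiagonal, Matrix.smul_apply, of_apply, Pi.smul_apply, smul_ite, smul_zero]

theorem tridiagonal_sub_smul_one [NonAssocRing R] (n : ℕ) (l d u : ℕ → R) (c : R) :
    tridiagonal n l d u - c • (1 : Matrix (Fin n) (Fin n) R) =
      tridiagonal n l (fun i => d i - c) u := by
  ext i j
  simp only [tridiagonal, Matrix.sub_apply, Matrix.smul_apply, of_apply, one_apply, smul_eq_mul,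
    Fin.ext_iff]
  split_ifs <;> first | omega | simp

end Tridiagonal

theorem Emat_eq_permMatrix (N : ℕ) : Emat N = Fin.revPerm.permMatrix ℚ := by
  ext i j
  have rev_eq_iff : i.rev = j ↔ (i : ℕ) + j = N := by
    rw [Fin.ext_iff, Fin.val_rev]
    omega
  simp [Emat, PEquiv.toMatrix_apply, Equiv.toPEquiv_apply, rev_eq_iff]

theorem Emat_mul_mul_Emat (N : ℕ) (M : Matrix (Fin (N + 1)) (Fin (N + 1)) ℚ) :
    Emat N * M * Emat N = M.submatrix Fin.rev Fin.rev := by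
  rw [Emat_eq_permMatrix, PEquiv.toMatrix_toPEquiv_mul, PEquiv.mul_toMatrix_toPEquiv]
  rfl

theorem Emat_mul_self (N : ℕ) : Emat N * Emat N = 1 := by
  simpa only [Matrix.mul_one, submatrix_one _ Fin.rev_injective] using Emat_mul_mul_Emat N 1

theorem inv_Emat (N : ℕ) : (Emat N)⁻¹ = Emat N :=
  inv_eq_left_inv (Emat_mul_self N)

theorem Smat_eq_tridiagonal (N : ℕ) :
    Smat N = tridiagonal (N + 1) (fun i => 2 * (N : ℚ) - i) 0
      (fun i => if i = N - 1 then 2 * (N : ℚ) else i + 1) := by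
  ext i j
  simp only [Smat, tridiagonal, of_apply, Pi.zero_apply]
  split_ifs <;> try first | omega | rfl
  rw [← ‹(j : ℕ) + 1 = i›, show 2 * N + 1 - (j + 1) = 2 * N - (j : ℕ) by omega,
    Nat.cast_sub (by omega), Nat.cast_mul, Nat.cast_two]

theorem Cmat_eq_tridiagonal (N : ℕ) (a : ℚ) :
    Cmat N a = tridiagonal (N + 1)
      (fun i => ((i : ℚ) + 1) * (i + 1 + 2 * a + N + 1) / (2 * (2 * (i + 1) + 2 * a + 1)))
      (fun _ => (N : ℚ) / 2)
      (fun i => if i = 0 then (N : ℚ) / 2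
        else (i + 2 * a + 1) * (N - i) / (2 * (2 * i + 2 * a + 1))) := by
  ext i j
  simp only [Cmat, tridiagonal, of_apply]
  split_ifs <;> try rfl
  rw [← ‹(j : ℕ) + 1 = i›, Nat.cast_add_one]

theorem two_smul_Cmat_neg_half_sub_eq_tridiagonal (N : ℕ) :
    (2 : ℚ) • Cmat N (-1 / 2) - (N : ℚ) • (1 : Matrix (Fin (N + 1)) (Fin (N + 1)) ℚ) =
      tridiagonal (N + 1) (fun i => ((N : ℚ) + 1 + i) / 2) 0
        (fun i => if i = 0 then (N : ℚ) else (N - i) / 2) := by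
  rw [Cmat_eq_tridiagonal, smul_tridiagonal, tridiagonal_sub_smul_one]
  refine tridiagonal_congr (fun i _ => ?lower) (fun i _ => ?diag) (fun i _ => ?upper)
  case lower =>
    have denominator : 2 * ((i : ℚ) + 1) + 2 * (-1 / 2) + 1 = 2 * (i + 1) := by ring
    have : (i : ℚ) + 1 ≠ 0 := by positivity
    simp only [Pi.smul_apply, smul_eq_mul, denominator]
    field_simp
    ring
  case diag =>
    simp only [Pi.smul_apply, smul_eq_mul, Pi.zero_apply]
    ring
  case upper =>
    have denominator : 2 * (i : ℚ) + 2 * (-1 / 2) + 1 = 2 * i := by ring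
    simp only [Pi.smul_apply, smul_eq_mul, denominator]
    split_ifs with hi
    · ring
    · have : (i : ℚ) ≠ 0 := Nat.cast_ne_zero.mpr hi
      field_simp
      ring

theorem submatrix_rev_transpose_half_smul_Smat_eq_tridiagonal (N : ℕ) :
    ((2⁻¹ : ℚ) • Smat N)ᵀ.submatrix Fin.rev Fin.rev =
      tridiagonal (N + 1) (fun i => ((N : ℚ) + 1 + i) / 2) 0
        (fun i => if i = 0 then (N : ℚ) else (N - i) / 2) := by
  rw [Smat_eq_tridiagonal, smul_tridiagonal, transpose_tridiagonal, submatrix_rev_tridiagonal]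
  have cast_rev {i : ℕ} (hi : i + 1 < N + 1) : ((N + 1 - (i + 2) : ℕ) : ℚ) = N - 1 - i := by
    rw [Nat.cast_sub hi]
    push_cast
    ring
  refine tridiagonal_congr (fun i hi => ?lower) (fun i _ => ?diag) (fun i hi => ?upper)
  case lower =>
    simp only [Pi.smul_apply, smul_eq_mul, cast_rev hi]
    ring
  case diag => simp only [smul_zero, Pi.zero_apply]
  case upper =>
    have rev_eq_last_iff : N + 1 - (i + 2) = N - 1 ↔ i = 0 := by omega
    simp only [Pi.smul_apply, smul_eq_mul, cast_rev hi, rev_eq_last_iff]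
    split_ifs <;> ring

theorem Emat_mul_transpose_half_smul_Smat_mul_Emat (N : ℕ) :
    Emat N * ((2⁻¹ : ℚ) • Smat N)ᵀ * Emat N =
      (2 : ℚ) • Cmat N (-1 / 2) - (N : ℚ) • (1 : Matrix (Fin (N + 1)) (Fin (N + 1)) ℚ) := by
  rw [Emat_mul_mul_Emat, submatrix_rev_transpose_half_smul_Smat_eq_tridiagonal,
    two_smul_Cmat_neg_half_sub_eq_tridiagonal]

theorem stmt_16 (N : ℕ) (hN : 1 ≤ N) :
    ((2⁻¹ : ℚ) • Smat N)ᵀ * Emat N =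
        Emat N * ((2 : ℚ) • Cmat N (-1/2) - (N : ℚ) • (1 : Matrix (Fin (N+1)) (Fin (N+1)) ℚ)) ∧
      ((2⁻¹ : ℚ) • Smat N)ᵀ =
        Emat N * ((2 : ℚ) • Cmat N (-1/2) - (N : ℚ) • (1 : Matrix (Fin (N+1)) (Fin (N+1)) ℚ)) *
          (Emat N)⁻¹ := by
  have intertwining : ((2⁻¹ : ℚ) • Smat N)ᵀ * Emat N = Emat N *
      ((2 : ℚ) • Cmat N (-1/2) - (N : ℚ) • (1 : Matrix (Fin (N+1)) (Fin (N+1)) ℚ)) := by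
    rw [← Emat_mul_transpose_half_smul_Smat_mul_Emat, Matrix.mul_assoc, ← Matrix.mul_assoc,
      Emat_mul_self, Matrix.one_mul]
  refine ⟨intertwining, ?_⟩
  rw [← intertwining, inv_Emat, Matrix.mul_assoc, Emat_mul_self, Matrix.mul_one]
end

section
/- Let N ≥ 1 and for j ∈ {0, …, N} set λ_j = 2·(2j − N). Define vectors u_j, v_j ∈ ℚ^{N+1} by u_j[k] = Σ_{i=0}^{min(N−k, j)} (−1)^{k+i}·C(N−k, i)·C(N−i, j−i)·(N+1−k)_{i+1}/((3/2)_i) for k = 0, …, N, and v_j[k] = C(2N+2, k)·u_j[k] for k = 0, …, N. Then u_j is a left eigenvector and v_j a right eigenvector of G_N for the eigenvalue λ_j: G_N^T · u_j = λ_j · u_j and G_N · v_j = λ_j · v_j for every j ∈ {0, …, N}. -/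
open Matrix

/-!
Write a vector as `k ↦ (-1) ^ k * f (N + 1 - k)`. If `f 0 = 0`, then `Gᵀ` acts on `f` as the
difference operator `T f x = (x - N - 1) f (x + 1) - (x + N + 1) f (x - 1)`. This operator is
bidiagonal on the odd polynomials `s i = (x - i) ⋯ (x + i)`: `T (s i)` is a combination of `s i`,
with coefficient `2 (2 i - N)`, and of `s (i - 1)`. So the coefficients of an eigenfunction solve a
two-term recurrence, and the solution for the eigenvalue `2 (2 j - N)` is `u_j`. Right eigenvectors
come from left ones because the binomial coefficients `C(2N+2, k)` symmetrize `G`.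
-/

section Bidiagonal

variable {R M : Type*} [CommRing R] [AddCommGroup M] [Module R M]

theorem map_sum_smul_eq_smul_of_bidiagonal {T : Module.End R M} {b : ℕ → M} {μ ν c : ℕ → R} {j : ℕ}
    (h_zero : T (b 0) = μ 0 • b 0)
    (h_succ : ∀ i, T (b (i + 1)) = μ (i + 1) • b (i + 1) + ν i • b i)
    (hc : ∀ i < j, c (i + 1) * ν i = (μ j - μ i) * c i) :
    T (∑ i ∈ Finset.range (j + 1), c i • b i) = μ j • ∑ i ∈ Finset.range (j + 1), c i • b i := by
  have image_expansion : T (∑ i ∈ Finset.range (j + 1), c i • b i) =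
      ∑ i ∈ Finset.range (j + 1), (c i * μ i) • b i +
        ∑ i ∈ Finset.range j, (c (i + 1) * ν i) • b i := by
    rw [map_sum, Finset.sum_range_succ', Finset.sum_range_succ']
    simp only [map_smul, h_zero, h_succ, smul_add, smul_smul, Finset.sum_add_distrib]
    rw [add_right_comm]
  have lower_terms : ∑ i ∈ Finset.range j, (c (i + 1) * ν i) • b i =
      ∑ i ∈ Finset.range (j + 1), ((μ j - μ i) * c i) • b i := by
    rw [Finset.sum_range_succ, sub_self, zero_mul, zero_smul, add_zero]
    exact Finset.sum_congr rfl fun i hi => by rw [hc i (Finset.mem_range.1 hi)]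
  rw [image_expansion, lower_terms, ← Finset.sum_add_distrib, Finset.smul_sum]
  refine Finset.sum_congr rfl fun i _ => ?_
  rw [← add_smul, smul_smul]
  congr 1
  ring

end Bidiagonal

section DifferenceOperator

variable {R : Type*} [CommRing R]

/-- The product `(x - i) ⋯ (x - 1) x (x + 1) ⋯ (x + i)` of `2 i + 1` factors, with the factors
`x - m` and `x + m` paired. -/
def symmFactorial (i : ℕ) (x : R) : R :=
  x * ∏ m ∈ Finset.range i, (x ^ 2 - (m + 1) ^ 2)

theorem symmFactorial_zero (x : R) : symmFactorial 0 x = x := by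
  simp [symmFactorial]

theorem symmFactorial_succ (i : ℕ) (x : R) :
    symmFactorial (i + 1) x = symmFactorial i x * (x ^ 2 - (i + 1) ^ 2) := by
  rw [symmFactorial, Finset.prod_range_succ, ← mul_assoc, symmFactorial]

theorem symmFactorial_apply_zero (i : ℕ) : symmFactorial i (0 : R) = 0 :=
  zero_mul _

theorem symmFactorial_neg (i : ℕ) (x : R) : symmFactorial i (-x) = -symmFactorial i x := by
  simp only [symmFactorial, neg_sq, neg_mul]

theorem symmFactorial_succ_add_one (i : ℕ) (x : R) :
    symmFactorial (i + 1) (x + 1) = symmFactorial i x * ((x + i + 1) * (x + i + 2)) := by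
  induction i with
  | zero => simp only [symmFactorial_succ, symmFactorial_zero]; push_cast; ring
  | succ i ih => rw [symmFactorial_succ, ih, symmFactorial_succ]; push_cast; ring

theorem symmFactorial_succ_sub_one (i : ℕ) (x : R) :
    symmFactorial (i + 1) (x - 1) = symmFactorial i x * ((x - i - 1) * (x - i - 2)) := by
  rw [show x - 1 = -(-x + 1) by ring, symmFactorial_neg, symmFactorial_succ_add_one,
    symmFactorial_neg]
  ring

theorem descPochhammer_eval_mul_ascPochhammer_eval (i : ℕ) (x : R) :
    (descPochhammer R i).eval (x - 1) * (ascPochhammer R (i + 1)).eval x = symmFactorial i x := by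
  induction i with
  | zero => simp [symmFactorial_zero]
  | succ i ih =>
    rw [symmFactorial_succ, ← ih, descPochhammer_succ_eval, ascPochhammer_succ_eval (i + 1)]
    push_cast
    ring

theorem symmFactorial_natCast_add_one (i n : ℕ) :
    symmFactorial i (n + 1 : R) =
      i.factorial * n.choose i * (ascPochhammer R (i + 1)).eval (n + 1 : R) := by
  rw [← descPochhammer_eval_mul_ascPochhammer_eval, add_sub_cancel_right,
    descPochhammer_eval_eq_descFactorial, Nat.descFactorial_eq_factorial_mul_choose, Nat.cast_mul]

/-- The operator `f ↦ (x - n - 1) f (x + 1) - (x + n + 1) f (x - 1)` on functions of `x`, which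
describes the action of the transpose of `Gmat` when `n = N`. -/
def differenceOperator (n : R) : Module.End R (R → R) where
  toFun f x := (x - n - 1) * f (x + 1) - (x + n + 1) * f (x - 1)
  map_add' f g := by ext x; simp only [Pi.add_apply]; ring
  map_smul' a f := by ext x; simp only [Pi.smul_apply, smul_eq_mul, RingHom.id_apply]; ring

theorem differenceOperator_apply (n : R) (f : R → R) (x : R) :
    differenceOperator n f x = (x - n - 1) * f (x + 1) - (x + n + 1) * f (x - 1) :=
  rfl

theorem differenceOperator_symmFactorial_zero (n : R) :
    differenceOperator n (symmFactorial 0) = (-2 * n) • symmFactorial 0 := by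
  ext x
  simp only [differenceOperator_apply, Pi.smul_apply, smul_eq_mul, symmFactorial_zero]
  ring

theorem differenceOperator_symmFactorial_succ (n : R) (i : ℕ) :
    differenceOperator n (symmFactorial (i + 1)) =
      (2 * (2 * (i + 1) - n)) • symmFactorial (i + 1) +
        (-2 * (i + 1) * (2 * i + 3) * (n - i)) • symmFactorial i := by
  ext x
  simp only [differenceOperator_apply, Pi.add_apply, Pi.smul_apply, smul_eq_mul,
    symmFactorial_succ_add_one, symmFactorial_succ_sub_one]
  rw [symmFactorial_succ]
  ring

end DifferenceOperator

section Eigenfunction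

theorem ascPochhammer_eval_three_halves_ne_zero (i : ℕ) :
    (ascPochhammer ℚ i).eval (3 / 2) ≠ 0 :=
  (ascPochhammer_pos i _ (by norm_num)).ne'

/-- The coefficient of `symmFactorial i` in the eigenfunction of `differenceOperator N` for the
eigenvalue `2 (2 j - N)`. -/
noncomputable def eigenCoeff (N j i : ℕ) : ℚ :=
  (-1) ^ i * (N - i).choose (j - i) / (i.factorial * (ascPochhammer ℚ i).eval (3 / 2))

theorem sub_mul_choose_sub_succ_cast (R : Type*) [Ring R] {N j i : ℕ} (hj : j ≤ N) (hi : i < j) :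
    (N - i : R) * (N - (i + 1)).choose (j - (i + 1)) = (j - i) * (N - i).choose (j - i) := by
  obtain ⟨n, hn⟩ : ∃ n, N - i = n + 1 := ⟨N - i - 1, by lia⟩
  obtain ⟨k, hk⟩ : ∃ k, j - i = k + 1 := ⟨j - i - 1, by lia⟩
  rw [← Nat.cast_sub (hi.le.trans hj), ← Nat.cast_sub hi.le, ← Nat.sub_sub, ← Nat.sub_sub, hn, hk]
  exact_mod_cast congrArg (Nat.cast : ℕ → R)
    ((Nat.add_one_mul_choose_eq n k).trans (mul_comm _ _))

theorem eigenCoeff_succ {N j i : ℕ} (hj : j ≤ N) (hi : i < j) :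
    eigenCoeff N j (i + 1) * (-2 * (i + 1) * (2 * i + 3) * (N - i)) =
      (2 * (2 * j - N) - 2 * (2 * i - N)) * eigenCoeff N j i := by
  have h_choose := sub_mul_choose_sub_succ_cast ℚ hj hi
  have h_poch := ascPochhammer_eval_three_halves_ne_zero i
  have h_fac : (i.factorial : ℚ) ≠ 0 := mod_cast i.factorial_ne_zero
  rw [eigenCoeff, eigenCoeff, ascPochhammer_succ_eval, Nat.factorial_succ]
  push_cast
  field_simp
  linear_combination 2 * (2 * i + 3) * (-1 : ℚ) ^ i * h_choose

/-- The eigenfunction of `differenceOperator N` for the eigenvalue `2 (2 j - N)`. -/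
noncomputable def eigenfunction (N j : ℕ) : ℚ → ℚ :=
  ∑ i ∈ Finset.range (j + 1), eigenCoeff N j i • symmFactorial i

theorem eigenfunction_apply (N j : ℕ) (x : ℚ) :
    eigenfunction N j x = ∑ i ∈ Finset.range (j + 1), eigenCoeff N j i * symmFactorial i x := by
  simp only [eigenfunction, Finset.sum_apply, Pi.smul_apply, smul_eq_mul]

theorem eigenfunction_apply_zero (N j : ℕ) : eigenfunction N j 0 = 0 := by
  simp only [eigenfunction_apply, symmFactorial_apply_zero, mul_zero, Finset.sum_const_zero]

theorem differenceOperator_eigenfunction {N j : ℕ} (hj : j ≤ N) :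
    differenceOperator (N : ℚ) (eigenfunction N j) =
      (2 * (2 * j - N : ℚ)) • eigenfunction N j :=
  map_sum_smul_eq_smul_of_bidiagonal (μ := fun i => 2 * (2 * (i : ℚ) - N))
    (by simpa using differenceOperator_symmFactorial_zero (N : ℚ))
    (fun i => by simpa using differenceOperator_symmFactorial_succ (N : ℚ) i)
    (fun _ hi => eigenCoeff_succ hj hi)

end Eigenfunction

section Gmat

theorem sum_ite_eq_val_add_one {M : Type*} [AddCommMonoid M] {n : ℕ} (k : Fin (n + 1)) {a : M}
    (ha : k = 0 → a = 0) : ∑ l : Fin (n + 1), (if (k : ℕ) = l + 1 then a else 0) = a := by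
  cases k using Fin.cases with
  | zero => simp [ha]
  | succ k =>
    simp only [Fin.val_succ, Nat.add_right_cancel_iff, ← Fin.val_castSucc k, Fin.val_inj,
      Finset.sum_ite_eq, Finset.mem_univ, if_true]

theorem sum_ite_val_eq_add_one {M : Type*} [AddCommMonoid M] {n : ℕ} (k : Fin (n + 1)) {a : M}
    (ha : k = Fin.last n → a = 0) :
    ∑ l : Fin (n + 1), (if (l : ℕ) = k + 1 then a else 0) = a := by
  cases k using Fin.lastCases with
  | last => simp [ha]
  | cast k =>
    simp only [Fin.val_castSucc, ← Fin.val_succ k, Fin.val_inj]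
    rw [Finset.sum_ite_eq' Finset.univ k.succ, if_pos (Finset.mem_univ _)]

theorem Gmat_apply (N : ℕ) (k l : Fin (N + 1)) :
    Gmat N k l = (if (l : ℕ) = k + 1 then (l : ℚ) else 0) +
      (if (k : ℕ) = l + 1 then 2 * N + 2 - (l : ℚ) else 0) := by
  simp only [Gmat, Matrix.of_apply, eq_comm (b := (k : ℕ))]
  split_ifs with h_upper h_lower h_lower
  · lia
  · rw [h_upper]; push_cast; ring
  · rw [h_lower, Nat.cast_sub (by lia : (l : ℕ) + 1 ≤ 2 * N + 3)]; push_cast; ring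
  · rw [add_zero]

/-- The vector `k ↦ (-1) ^ k * f (N + 1 - k)` of values of `f` at `N + 1, N, …, 1`. -/
def alternatingSample (N : ℕ) : (ℚ → ℚ) →ₗ[ℚ] (Fin (N + 1) → ℚ) where
  toFun f k := (-1) ^ (k : ℕ) * f (N + 1 - (k : ℕ))
  map_add' f g := by ext k; simp only [Pi.add_apply]; ring
  map_smul' a f := by ext k; simp only [Pi.smul_apply, smul_eq_mul, RingHom.id_apply]; ring

theorem alternatingSample_apply (N : ℕ) (f : ℚ → ℚ) (k : Fin (N + 1)) :
    alternatingSample N f k = (-1) ^ (k : ℕ) * f (N + 1 - (k : ℕ)) :=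
  rfl

theorem Gmat_transpose_mulVec_alternatingSample (N : ℕ) {f : ℚ → ℚ} (hf : f 0 = 0) :
    (Gmat N)ᵀ *ᵥ alternatingSample N f = alternatingSample N (differenceOperator (N : ℚ) f) := by
  ext k
  set x : ℚ := N + 1 - (k : ℕ) with hx
  set s : ℚ := (-1) ^ (k : ℕ) with hs
  have h_term (l : Fin (N + 1)) : (Gmat N)ᵀ k l * alternatingSample N f l =
      (if (k : ℕ) = l + 1 then s * ((x - N - 1) * f (x + 1)) else 0) +
        (if (l : ℕ) = k + 1 then -(s * ((x + N + 1) * f (x - 1))) else 0) := by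
    rw [Matrix.transpose_apply, Gmat_apply, alternatingSample_apply, add_mul, ite_mul, ite_mul,
      zero_mul]
    congr 1
    · refine if_ctx_congr Iff.rfl (fun h => ?_) fun _ => rfl
      have h_node : x + 1 = N + 1 - (l : ℕ) := by rw [hx, h]; push_cast; ring
      rw [h_node, hx, hs, h, pow_succ]
      push_cast
      ring
    · refine if_ctx_congr Iff.rfl (fun h => ?_) fun _ => rfl
      have h_node : x - 1 = N + 1 - (l : ℕ) := by rw [hx, h]; push_cast; ring
      rw [h_node, hx, hs, h, pow_succ]
      push_cast
      ring
  have h_first (h : k = 0) : s * ((x - N - 1) * f (x + 1)) = 0 := by simp [hx, h]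
  have h_last (h : k = Fin.last N) : -(s * ((x + N + 1) * f (x - 1))) = 0 := by
    simp [hx, h, hf]
  simp only [Matrix.mulVec, dotProduct, h_term, Finset.sum_add_distrib]
  rw [sum_ite_eq_val_add_one k h_first, sum_ite_val_eq_add_one k h_last, alternatingSample_apply,
    differenceOperator_apply]
  ring

theorem choose_succ_mul_succ_cast (R : Type*) [Ring R] (n k : ℕ) :
    (n.choose (k + 1) : R) * (k + 1) = n.choose k * (n - k) := by
  rcases le_or_gt k n with h | h
  · rw [← Nat.cast_sub h]
    exact_mod_cast congrArg (Nat.cast : ℕ → R) (Nat.choose_succ_right_eq n k)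
  · simp [Nat.choose_eq_zero_of_lt h, Nat.choose_eq_zero_of_lt (Nat.lt_succ_of_lt h)]

theorem semiconjBy_diagonal_choose_Gmat (N : ℕ) :
    SemiconjBy (diagonal fun k : Fin (N + 1) => ((2 * N + 2).choose k : ℚ)) (Gmat N)ᵀ (Gmat N) := by
  ext k l
  rw [diagonal_mul, mul_diagonal, transpose_apply, Gmat_apply, Gmat_apply]
  split_ifs with h_lower h_upper h_upper
  · lia
  · have h := choose_succ_mul_succ_cast ℚ (2 * N + 2) l
    rw [h_lower]
    push_cast at h ⊢
    linear_combination h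
  · have h := choose_succ_mul_succ_cast ℚ (2 * N + 2) k
    rw [h_upper]
    push_cast at h ⊢
    linear_combination -h
  · ring

theorem alternatingSample_eigenfunction_apply (N j : ℕ) (k : Fin (N + 1)) :
    alternatingSample N (eigenfunction N j) k =
      ∑ i ∈ Finset.range (min (N - (k : ℕ)) j + 1),
        (-1 : ℚ) ^ ((k : ℕ) + i) * ((N - (k : ℕ)).choose i : ℚ) * ((N - i).choose (j - i) : ℚ) *
          ((ascPochhammer ℚ (i + 1)).eval (((N + 1 - (k : ℕ) : ℕ) : ℚ)) /
            (ascPochhammer ℚ i).eval (3 / 2 : ℚ)) := by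
  obtain ⟨n, hn⟩ := Nat.exists_eq_add_of_le k.is_le
  have h_node : (N + 1 - (k : ℕ) : ℚ) = n + 1 := by
    have hn_cast : (N : ℚ) = (k : ℕ) + n := mod_cast hn
    linear_combination hn_cast
  rw [show N - (k : ℕ) = n by lia, show N + 1 - (k : ℕ) = n + 1 by lia, alternatingSample_apply,
    h_node, eigenfunction_apply, Finset.mul_sum]
  symm
  apply Finset.sum_subset_zero_on_sdiff (Finset.range_mono (by lia))
  · intro i hi
    have n_lt : n < i := by grind
    simp [symmFactorial_natCast_add_one, Nat.choose_eq_zero_of_lt n_lt]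
  · intro i _
    have h_poch := ascPochhammer_eval_three_halves_ne_zero i
    have h_fac : (i.factorial : ℚ) ≠ 0 := mod_cast i.factorial_ne_zero
    rw [symmFactorial_natCast_add_one, eigenCoeff]
    push_cast
    field_simp
    ring

end Gmat

theorem stmt_19 (N : ℕ) (hN : 1 ≤ N)
    (u v : Fin (N+1) → Fin (N+1) → ℚ)
    (hu : ∀ j k, u j k =
      ∑ i ∈ Finset.range (min (N - (k : ℕ)) (j : ℕ) + 1),
        (-1 : ℚ) ^ ((k : ℕ) + i) * ((N - (k : ℕ)).choose i : ℚ) *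
          ((N - i).choose ((j : ℕ) - i) : ℚ) *
          ((ascPochhammer ℚ (i + 1)).eval (((N + 1 - (k : ℕ) : ℕ) : ℚ)) /
            (ascPochhammer ℚ i).eval (3/2 : ℚ)))
    (hv : ∀ j k, v j k = ((2 * N + 2).choose (k : ℕ) : ℚ) * u j k) :
    ∀ j : Fin (N+1),
      (Gmat N)ᵀ.mulVec (u j) = (2 * (2 * (j : ℕ) - (N : ℚ))) • u j ∧
      (Gmat N).mulVec (v j) = (2 * (2 * (j : ℕ) - (N : ℚ))) • v j := by
  intro j
  have u_eq : u j = alternatingSample N (eigenfunction N j) := by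
    ext k
    rw [hu, alternatingSample_eigenfunction_apply]
  have v_eq : v j = diagonal (fun k : Fin (N + 1) => ((2 * N + 2).choose k : ℚ)) *ᵥ u j := by
    ext k
    rw [hv, mulVec_diagonal]
  have left_eigenvector : (Gmat N)ᵀ *ᵥ u j = (2 * (2 * (j : ℕ) - (N : ℚ))) • u j := by
    rw [u_eq, Gmat_transpose_mulVec_alternatingSample N (eigenfunction_apply_zero N j),
      differenceOperator_eigenfunction j.is_le, map_smul]
  refine ⟨left_eigenvector, ?_⟩
  rw [v_eq, mulVec_mulVec, ← (semiconjBy_diagonal_choose_Gmat N).eq, ← mulVec_mulVec,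
    left_eigenvector, mulVec_smul]
end
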